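/- arXiv:1408.2439 — 2 statements merged into one kernel-verified Lean document; each statement's English description precedes it below -/
import Mathlib

section
/- Let (Δ,Φ) be a Lorentzian based root system with root basis Δ. Then the following are equivalent: (a) (Δ,Φ) has level 2; (b) the orbit Ω contains a space-like vector, and any two space-like vectors x, y ∈ Ω such that x is not a scalar multiple of y are disjoint. (Condition (b) says exactly that the balls corresponding to the space-like vectors of Ω form a ball packing, i.e. have pairwise disjoint interiors.) -/
open scoped BigOperators

namespace BoydMaxwell

variable {V : Type*} [AddCommGroup V] [Module ℝ V]

/-- `(V, B)` is a Lorentz space: `B` is non-degenerate with exactly one negative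
eigenvalue, i.e. there is a time-like vector but every subspace on which `B` is
negative definite has dimension at most `1`. -/
def IsLorentz (B : LinearMap.BilinForm ℝ V) : Prop :=
  B.Nondegenerate ∧ (∃ v : V, B v v < 0) ∧
    ∀ W : Submodule ℝ V, (∀ v ∈ W, v ≠ 0 → B v v < 0) → Module.finrank ℝ W ≤ 1

/-- A root basis in the quadratic space `(V, B)`. -/
structure IsRootBasis (B : LinearMap.BilinForm ℝ V) (Δ : Finset V) : Prop where
  unit : ∀ α ∈ Δ, B α α = 1
  offdiag : ∀ α ∈ Δ, ∀ β ∈ Δ, α ≠ β →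
    B α β ≤ -1 ∨ ∃ k : ℕ, 2 ≤ k ∧ B α β = -Real.cos (Real.pi / k)
  posIndep : ∀ c : V → ℝ, (∀ α ∈ Δ, 0 ≤ c α) →
    (∑ α ∈ Δ, c α • α) = 0 → ∀ α ∈ Δ, c α = 0
  spans : Submodule.span ℝ (Δ : Set V) = ⊤

/-- The reflection `s_α : x ↦ x - 2 B(α,x) α`. -/
def reflection (B : LinearMap.BilinForm ℝ V) (α : V) : V →ₗ[ℝ] V :=
  LinearMap.id - (B α).smulRight ((2 : ℝ) • α)

/-- The Weyl group `W`: the subgroup of linear automorphisms generated by the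
reflections in the simple roots. -/
def weylGroup (B : LinearMap.BilinForm ℝ V) (Δ : Finset V) : Subgroup (V ≃ₗ[ℝ] V) :=
  Subgroup.closure { g : V ≃ₗ[ℝ] V | ∃ α ∈ Δ, (g : V →ₗ[ℝ] V) = reflection B α }

/-- The set of roots `Φ = W(Δ)`. -/
def roots (B : LinearMap.BilinForm ℝ V) (Δ : Finset V) : Set V :=
  { x | ∃ w ∈ weylGroup B Δ, ∃ α ∈ Δ, x = w α }

/-- The polyhedral cone of non-negative linear combinations of a finite set. -/
def cone (Δ : Finset V) : Set V :=
  { x | ∃ c : V → ℝ, (∀ α ∈ Δ, 0 ≤ c α) ∧ x = ∑ α ∈ Δ, c α • α }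

/-- `F` is a face of the convex set `C`. -/
def IsFace (C F : Set V) : Prop :=
  F ⊆ C ∧ Convex ℝ F ∧ ∀ x ∈ C, ∀ y ∈ C, ∀ t : ℝ, 0 < t → t < 1 →
    t • x + (1 - t) • y ∈ F → x ∈ F ∧ y ∈ F

/-- `I ⊆ Δ` is an `l`-facial subset: `Cone(I)` is a face of `Cone(Δ)` and
`Span(I)` has codimension `l` in `V`. -/
def IsFacial (Δ I : Finset V) (l : ℕ) : Prop :=
  I ⊆ Δ ∧ IsFace (cone Δ) (cone I) ∧
    Module.finrank ℝ (Submodule.span ℝ (I : Set V)) + l = Module.finrank ℝ V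

/-- `B` is positive semidefinite on the span of every `l`-facial subset. -/
def LevelLE (B : LinearMap.BilinForm ℝ V) (Δ : Finset V) (l : ℕ) : Prop :=
  ∀ I : Finset V, IsFacial Δ I l → ∀ x ∈ Submodule.span ℝ (I : Set V), 0 ≤ B x x

/-- The root system generated by `Δ` has level exactly `l`: `l` is the smallest
integer such that `B` is positive semidefinite on the span of every `l`-facial
subset of `Δ`. -/
def HasLevel (B : LinearMap.BilinForm ℝ V) (Δ : Finset V) (l : ℕ) : Prop :=
  LevelLE B Δ l ∧ ∀ m : ℕ, m < l → ¬ LevelLE B Δ m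

/-- `ω` is the weight associated to the `1`-facial subset `I`. -/
def IsWeight (B : LinearMap.BilinForm ℝ V) (Δ I : Finset V) (ω : V) : Prop :=
  IsFacial Δ I 1 ∧ (∀ α ∈ I, B α ω = 0) ∧
    (∀ α ∈ Δ, α ∉ I → 0 < B α ω) ∧
    (∀ α ∈ Δ, α ∉ I → 1 ≤ B α ω) ∧ (∃ α ∈ Δ, α ∉ I ∧ B α ω = 1)

/-- The set `Δ*` of weights. -/
def weights (B : LinearMap.BilinForm ℝ V) (Δ : Finset V) : Set V :=
  { ω | ∃ I : Finset V, IsWeight B Δ I ω }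

/-- The orbit `Ω = W(Δ*)`. -/
def Omega (B : LinearMap.BilinForm ℝ V) (Δ : Finset V) : Set V :=
  { x | ∃ w ∈ weylGroup B Δ, ∃ ω ∈ weights B Δ, x = w ω }

/-- Two vectors are disjoint: `B(x,y) ≤ 0` and `B` is not positive definite on
`Span{x,y}`. -/
def DisjointVec (B : LinearMap.BilinForm ℝ V) (x y : V) : Prop :=
  B x y ≤ 0 ∧ ¬ ∀ z ∈ Submodule.span ℝ ({x, y} : Set V), z ≠ 0 → 0 < B z z

/-- The fundamental chamber `C* = {x | B(x, α) ≥ 0 for all α ∈ Δ}`. -/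
def chamber (B : LinearMap.BilinForm ℝ V) (Δ : Finset V) : Set V :=
  { x | ∀ α ∈ Δ, 0 ≤ B x α }

/-- The Tits cone `T = ⋃_{w ∈ W} w(C*)`. -/
def titsCone (B : LinearMap.BilinForm ℝ V) (Δ : Finset V) : Set V :=
  { x | ∃ w ∈ weylGroup B Δ, ∃ y ∈ chamber B Δ, x = w y }

/-- The convex cone generated by an arbitrary set. -/
def coneOf (X : Set V) : Set V :=
  { x | ∃ (s : Finset V) (c : V → ℝ), (↑s ⊆ X) ∧ (∀ v ∈ s, 0 ≤ c v) ∧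
      x = ∑ v ∈ s, c v • v }


/-! ### Elementary facts on reflections and words -/

section Words

lemma reflection_apply (B : LinearMap.BilinForm ℝ V) (α x : V) :
    reflection B α x = x - (2 * B α x) • α := by
  simp [reflection, smul_smul, mul_comm]

/-- The product of the reflections of a list of vectors. -/
def word (B : LinearMap.BilinForm ℝ V) : List V → V →ₗ[ℝ] V
  | [] => LinearMap.id
  | α :: l => reflection B α ∘ₗ word B l

lemma word_append (B : LinearMap.BilinForm ℝ V) (l m : List V) :
    word B (l ++ m) = word B l ∘ₗ word B m := by
  induction l with
  | nil => rfl
  | cons a l ih => simp only [List.cons_append, word, ih, LinearMap.comp_assoc]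

lemma word_singleton (B : LinearMap.BilinForm ℝ V) (a : V) :
    word B [a] = reflection B a := rfl

lemma reflection_isom {B : LinearMap.BilinForm ℝ V} (hs : ∀ x y : V, B x y = B y x)
    {α : V} (h1 : B α α = 1) (x y : V) : B (reflection B α x) (reflection B α y) = B x y := by
  simp only [reflection_apply, map_sub, map_smul, LinearMap.sub_apply, LinearMap.smul_apply,
    smul_eq_mul, h1, hs x α]
  ring

lemma reflection_invol {B : LinearMap.BilinForm ℝ V}
    {α : V} (h1 : B α α = 1) : reflection B α ∘ₗ reflection B α = LinearMap.id := by
  ext x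
  simp only [LinearMap.comp_apply, reflection_apply, map_sub, map_smul, smul_eq_mul, h1,
    LinearMap.id_apply]
  module

lemma word_isom {B : LinearMap.BilinForm ℝ V} (hs : ∀ x y : V, B x y = B y x)
    {l : List V} (hl : ∀ α ∈ l, B α α = 1) (x y : V) : B (word B l x) (word B l y) = B x y := by
  induction l with
  | nil => rfl
  | cons a l ih =>
    simp only [word, LinearMap.comp_apply]
    rw [reflection_isom hs (hl a (by simp)), ih (fun α h => hl α (by simp [h]))]

lemma word_conj {B : LinearMap.BilinForm ℝ V} (hs : ∀ x y : V, B x y = B y x)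
    {l : List V} (hl : ∀ α ∈ l, B α α = 1) (α : V) :
    reflection B (word B l α) ∘ₗ word B l = word B l ∘ₗ reflection B α := by
  ext x
  simp only [LinearMap.comp_apply, reflection_apply, map_sub, map_smul, word_isom hs hl]

lemma word_cancel {B : LinearMap.BilinForm ℝ V} {a : V} (h1 : B a a = 1) (l m : List V) :
    word B (l ++ a :: a :: m) = word B (l ++ m) := by
  simp only [word_append, word]
  congr 1
  rw [← LinearMap.comp_assoc, reflection_invol h1, LinearMap.id_comp]

lemma exists_word {B : LinearMap.BilinForm ℝ V} {Δ : Finset V} (hu : ∀ α ∈ Δ, B α α = 1)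
    (w : V ≃ₗ[ℝ] V) (hw : w ∈ weylGroup B Δ) :
    ∃ l : List V, (∀ α ∈ l, α ∈ Δ) ∧ word B l = (w : V →ₗ[ℝ] V) := by
  have key : ∃ l : List V, (∀ α ∈ l, α ∈ Δ) ∧ word B l = (w : V →ₗ[ℝ] V) ∧
      word B l.reverse = ((w⁻¹ : V ≃ₗ[ℝ] V) : V →ₗ[ℝ] V) := by
    refine Subgroup.closure_induction (p := fun (w : V ≃ₗ[ℝ] V) _ => ∃ l : List V, (∀ α ∈ l, α ∈ Δ) ∧
      word B l = (w : V →ₗ[ℝ] V) ∧ word B l.reverse = ((w⁻¹ : V ≃ₗ[ℝ] V) : V →ₗ[ℝ] V))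
      ?_ ?_ ?_ ?_ hw
    · rintro g ⟨α, hα, hg⟩
      refine ⟨[α], by simpa using hα, by rw [hg]; rfl, ?_⟩
      simp only [List.reverse_singleton, word_singleton]
      ext x
      have h2 := congrArg (fun f => f (g⁻¹ x)) (reflection_invol (hu α hα))
      have h3 : ∀ y, reflection B α y = g y := fun y => by rw [← hg]; rfl
      simp only [LinearMap.comp_apply, LinearMap.id_apply, h3] at h2
      rw [show g (g⁻¹ x) = x from g.apply_symm_apply x] at h2
      rw [h3, h2]; rfl
    · exact ⟨[], by simp, rfl, rfl⟩
    · rintro x y _ _ ⟨l, hl, h1, h2⟩ ⟨m, hm, h3, h4⟩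
      refine ⟨l ++ m, ?_, ?_, ?_⟩
      · intro α hα
        rcases List.mem_append.1 hα with h | h
        exacts [hl α h, hm α h]
      · rw [word_append, h1, h3]; rfl
      · rw [List.reverse_append, word_append, h2, h4, mul_inv_rev]; rfl
    · rintro x _ ⟨l, hl, h1, h2⟩
      refine ⟨l.reverse, by simpa using hl, h2, ?_⟩
      rw [List.reverse_reverse, h1, inv_inv]
  obtain ⟨l, h1, h2, _⟩ := key
  exact ⟨l, h1, h2⟩

/-! ### Dihedral computation -/

/-- Chebyshev type sequence. -/
def chebU (c : ℝ) : ℕ → ℝ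
  | 0 => 0
  | 1 => 1
  | (n + 2) => 2 * c * chebU c (n + 1) - chebU c n

lemma chebU_sin (θ : ℝ) (n : ℕ) : chebU (Real.cos θ) n * Real.sin θ = Real.sin (n * θ) := by
  induction n using Nat.twoStepInduction with
  | zero => simp [chebU]
  | one => simp [chebU]
  | more n h1 h2 =>
    rw [chebU, sub_mul, mul_assoc, h2, h1]
    have e1 : ((n + 2 : ℕ) : ℝ) * θ = ((n + 1 : ℕ) : ℝ) * θ + θ := by push_cast; ring
    have e2 : (n : ℝ) * θ = ((n + 1 : ℕ) : ℝ) * θ - θ := by push_cast; ring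
    rw [e1, e2, Real.sin_add, Real.sin_sub]; ring

lemma chebU_mono {c : ℝ} (hc : 1 ≤ c) (n : ℕ) :
    0 ≤ chebU c n ∧ chebU c n ≤ chebU c (n + 1) := by
  induction n with
  | zero => simp [chebU]
  | succ n ih =>
    refine ⟨ih.1.trans ih.2, ?_⟩
    rw [chebU]
    nlinarith [ih.1, ih.2]

lemma chebU_cos_nonneg {k : ℕ} (hk : 2 ≤ k) {n : ℕ} (hn : n ≤ k) :
    0 ≤ chebU (Real.cos (Real.pi / k)) n := by
  have hk0 : (0 : ℝ) < k := by positivity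
  have hk2 : (2 : ℝ) ≤ k := by exact_mod_cast hk
  have hs : 0 < Real.sin (Real.pi / k) := by
    apply Real.sin_pos_of_pos_of_lt_pi (by positivity)
    rw [div_lt_iff₀ hk0]; nlinarith [Real.pi_pos]
  have h := chebU_sin (Real.pi / k) n
  have h2 : 0 ≤ Real.sin (n * (Real.pi / k)) := by
    apply Real.sin_nonneg_of_nonneg_of_le_pi (by positivity)
    have : (n : ℝ) ≤ k := by exact_mod_cast hn
    rw [mul_div_assoc', div_le_iff₀ hk0]; nlinarith [Real.pi_pos]
  rw [← h] at h2
  exact nonneg_of_mul_nonneg_left h2 hs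

lemma chebU_cos_end {k : ℕ} (hk : 2 ≤ k) :
    chebU (Real.cos (Real.pi / k)) k = 0 ∧ chebU (Real.cos (Real.pi / k)) (k - 1) = 1 := by
  have hk0 : (0 : ℝ) < k := by positivity
  have hk2 : (2 : ℝ) ≤ k := by exact_mod_cast hk
  have hs : 0 < Real.sin (Real.pi / k) := by
    apply Real.sin_pos_of_pos_of_lt_pi (by positivity)
    rw [div_lt_iff₀ hk0]; nlinarith [Real.pi_pos]
  constructor
  · have h := chebU_sin (Real.pi / k) k
    rw [mul_div_cancel₀ _ hk0.ne', Real.sin_pi] at h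
    exact (mul_eq_zero.1 h).resolve_right hs.ne'
  · have h := chebU_sin (Real.pi / k) (k - 1)
    have e : ((k - 1 : ℕ) : ℝ) * (Real.pi / k) = Real.pi - Real.pi / k := by
      rw [Nat.cast_sub (by omega)]; field_simp; simp
    rw [e, Real.sin_pi_sub] at h
    exact mul_right_cancel₀ hs.ne' (by rw [h, one_mul])

/-- The letter preceding the alternating word of length `m`. -/
def nextL (α β : V) (m : ℕ) : V := if Even m then β else α

/-- The alternating word of length `m` ending in `β`. -/
def alt (α β : V) : ℕ → List V
  | 0 => []
  | m + 1 => nextL α β m :: alt α β m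

lemma alt_length (α β : V) (m : ℕ) : (alt α β m).length = m := by
  induction m with
  | zero => rfl
  | succ m ih => simp [alt, ih]

lemma alt_mem (α β : V) (m : ℕ) : ∀ γ ∈ alt α β m, γ = α ∨ γ = β := by
  induction m with
  | zero => simp [alt]
  | succ m ih =>
    intro γ hγ
    rcases List.mem_cons.1 hγ with h | h
    · unfold nextL at h; split_ifs at h <;> simp [h]
    · exact ih γ h

lemma alt_apply {B : LinearMap.BilinForm ℝ V} (hs : ∀ x y : V, B x y = B y x) {α β : V}
    (hα : B α α = 1) (hβ : B β β = 1) (m : ℕ) :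
    word B (alt α β m) α = chebU (- B α β) (m + 1) • nextL α β (m + 1)
      + chebU (- B α β) m • nextL α β m := by
  induction m with
  | zero => simp [alt, word, chebU, nextL]
  | succ m ih =>
    simp only [alt, word, LinearMap.comp_apply, ih]
    rw [chebU]
    rcases Nat.even_or_odd m with h | h
    · have h1 : ¬ Even (m + 1) := by simpa [Nat.even_add_one] using h
      have h2 : Even (m + 1 + 1) := by simpa [Nat.even_add_one] using h
      simp only [nextL, h, h1, h2, if_true, if_false, reflection_apply, map_add, map_smul,
        smul_eq_mul, hβ, hs β α]
      module
    · have h0 : ¬ Even m := by simpa using h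
      have h1 : Even (m + 1) := by simpa [Nat.even_add_one] using h
      have h2 : ¬ Even (m + 1 + 1) := by simpa [Nat.even_add_one] using h
      simp only [nextL, h0, h1, h2, if_true, if_false, reflection_apply, map_add, map_smul,
        smul_eq_mul, hα]
      module

lemma dihedral_alt {B : LinearMap.BilinForm ℝ V} (hs : ∀ x y : V, B x y = B y x) {α β : V}
    (hα : B α α = 1) (hβ : B β β = 1) (d : List V) (hd : ∀ γ ∈ d, γ = α ∨ γ = β)
    (h1 : ∀ d' : List V, (∀ γ ∈ d', γ = α ∨ γ = β) → word B d' = word B d →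
      d.length ≤ d'.length)
    (h2 : ∀ d' : List V, (∀ γ ∈ d', γ = α ∨ γ = β) → word B d' = word B d ∘ₗ reflection B α →
      d.length ≤ d'.length) :
    d = alt α β d.length ∧
      ∀ k : ℕ, 2 ≤ k → B α β = - Real.cos (Real.pi / k) → d.length < k := by
  induction d with
  | nil => exact ⟨rfl, fun k hk _ => by simp; omega⟩
  | cons γ e ih =>
    have hγ := hd γ (by simp)
    have he : ∀ γ ∈ e, γ = α ∨ γ = β := fun x hx => hd x (by simp [hx])
    have hcons : ∀ d' : List V, (∀ γ ∈ d', γ = α ∨ γ = β) →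
        ∀ x ∈ γ :: d', x = α ∨ x = β := by
      intro d' h x hx
      rcases List.mem_cons.1 hx with rfl | hx
      exacts [hγ, h x hx]
    obtain ⟨ih1, ih2⟩ := ih he
      (fun d' hd' h => by
        have := h1 (γ :: d') (hcons d' hd') (by simp only [word, h])
        simpa using this)
      (fun d' hd' h => by
        have := h2 (γ :: d') (hcons d' hd') (by simp only [word, h, LinearMap.comp_assoc])
        simpa using this)
    have hγ1 : B γ γ = 1 := by rcases hγ with h | h <;> rw [h] <;> assumption
    set m := e.length with hm
    have hγn : γ = nextL α β m := by
      by_contra hne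
      rcases Nat.eq_zero_or_pos m with h0 | h0
      · have hγα : γ = α := by
          rcases hγ with h | h
          · exact h
          · exact absurd (by simp [h0, nextL, h]) hne
        have he0 : e = [] := List.length_eq_zero_iff.1 (hm ▸ h0)
        have := h2 [] (by simp) (by
          rw [he0, hγα, word_singleton, reflection_invol hα]; rfl)
        simp at this
      · obtain ⟨j, hj⟩ : ∃ j, m = j + 1 := ⟨m - 1, by omega⟩
        have hγj : γ = nextL α β j := by
          rw [hj] at hne
          unfold nextL at hne ⊢
          by_cases hev : Even j
          · have hev1 : ¬ Even (j + 1) := by simpa [Nat.even_add_one] using hev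
            simp only [hev, hev1, if_false, if_true] at hne ⊢
            exact hγ.resolve_left hne
          · have hev1 : Even (j + 1) := by simpa [Nat.even_add_one] using hev
            simp only [hev, hev1, if_false, if_true] at hne ⊢
            exact hγ.resolve_right hne
        have he' : e = γ :: alt α β j := by rw [ih1, hj, alt, hγj]
        have := h1 (alt α β j) (alt_mem α β j) (by
          rw [he']; exact (word_cancel hγ1 [] _).symm)
        rw [alt_length] at this
        simp only [List.length_cons, ← hm] at this
        omega
    refine ⟨?_, ?_⟩
    · simp only [List.length_cons, alt]
      rw [← hm, ← hγn, ← ih1]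
    · intro k hk hB
      have hlt := ih2 k hk hB
      by_contra hcon
      have hmk : m + 1 = k := by simp only [List.length_cons] at hcon; omega
      have happ := alt_apply hs hα hβ m
      have hend := chebU_cos_end hk
      rw [hB, neg_neg, hmk, hend.1, show m = k - 1 by omega, hend.2, zero_smul, zero_add,
        one_smul, show k - 1 = m by omega, ← hγn, ← ih1] at happ
      have hc := word_conj hs (l := e) (fun x hx => by
        rcases he x hx with h | h <;> rw [h] <;> assumption) α
      rw [happ] at hc
      have := h2 e he (by
        simp only [word]
        rw [hc, LinearMap.comp_assoc, reflection_invol hα, LinearMap.comp_id])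
      simp at this

/-- Positivity in a dihedral group. -/
lemma dihedral_pos {B : LinearMap.BilinForm ℝ V} (hs : ∀ x y : V, B x y = B y x) {α β : V}
    (hα : B α α = 1) (hβ : B β β = 1)
    (hαβ : B α β ≤ -1 ∨ ∃ k : ℕ, 2 ≤ k ∧ B α β = -Real.cos (Real.pi / k))
    (d : List V) (hd : ∀ γ ∈ d, γ = α ∨ γ = β)
    (h1 : ∀ d' : List V, (∀ γ ∈ d', γ = α ∨ γ = β) → word B d' = word B d →
      d.length ≤ d'.length)
    (h2 : ∀ d' : List V, (∀ γ ∈ d', γ = α ∨ γ = β) → word B d' = word B d ∘ₗ reflection B α →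
      d.length ≤ d'.length) :
    ∃ p q : ℝ, 0 ≤ p ∧ 0 ≤ q ∧ word B d α = p • α + q • β := by
  obtain ⟨e1, e2⟩ := dihedral_alt hs hα hβ d hd h1 h2
  have hU : 0 ≤ chebU (- B α β) (d.length + 1) ∧ 0 ≤ chebU (- B α β) d.length := by
    rcases hαβ with h | ⟨k, hk, h⟩
    · have hc : 1 ≤ - B α β := by linarith
      exact ⟨(chebU_mono hc _).1, (chebU_mono hc _).1⟩
    · have := e2 k hk h
      rw [h, neg_neg]
      exact ⟨chebU_cos_nonneg hk (by omega), chebU_cos_nonneg hk (by omega)⟩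
  have happ := alt_apply hs hα hβ d.length
  rw [← e1] at happ
  rcases Nat.even_or_odd d.length with h | h
  · have h1 : ¬ Even (d.length + 1) := by simpa [Nat.even_add_one] using h
    simp only [nextL, h, h1, if_true, if_false] at happ
    exact ⟨_, _, hU.1, hU.2, happ⟩
  · have h0 : ¬ Even d.length := by simpa using h
    have h1 : Even (d.length + 1) := by simpa [Nat.even_add_one] using h
    simp only [nextL, h0, h1, if_true, if_false] at happ
    exact ⟨_, _, hU.2, hU.1, by rw [happ, add_comm]⟩

end Words

/-! ### Cones -/

section Cones

lemma cone_zero (Δ : Finset V) : (0 : V) ∈ cone Δ := ⟨fun _ => 0, by simp, by simp⟩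

lemma cone_add {Δ : Finset V} {x y : V} (hx : x ∈ cone Δ) (hy : y ∈ cone Δ) :
    x + y ∈ cone Δ := by
  obtain ⟨c, hc, rfl⟩ := hx
  obtain ⟨d, hd, rfl⟩ := hy
  exact ⟨fun a => c a + d a, fun a ha => add_nonneg (hc a ha) (hd a ha), by
    simp [add_smul, Finset.sum_add_distrib]⟩

lemma cone_smul {Δ : Finset V} {x : V} (hx : x ∈ cone Δ) {r : ℝ} (hr : 0 ≤ r) :
    r • x ∈ cone Δ := by
  obtain ⟨c, hc, rfl⟩ := hx
  exact ⟨fun a => r * c a, fun a ha => mul_nonneg hr (hc a ha), by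
    simp [mul_smul, Finset.smul_sum]⟩

lemma cone_mem {Δ : Finset V} {a : V} (ha : a ∈ Δ) : a ∈ cone Δ := by
  classical
  refine ⟨fun b => if b = a then 1 else 0, fun b _ => by positivity, ?_⟩
  simp [ite_smul, ha]

lemma cone_sum {Δ : Finset V} {ι : Type*} (s : Finset ι) (f : ι → V)
    (h : ∀ i ∈ s, f i ∈ cone Δ) : ∑ i ∈ s, f i ∈ cone Δ := by
  classical
  induction s using Finset.induction_on with
  | empty => simpa using cone_zero Δ
  | insert a s ha ih =>
    rw [Finset.sum_insert ha]
    exact cone_add (h a (by simp)) (ih fun i hi => h i (by simp [hi]))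

lemma cone_mono {I Δ : Finset V} (h : I ⊆ Δ) : cone I ⊆ cone Δ := by
  rintro x ⟨c, hc, rfl⟩
  exact cone_sum _ _ fun a ha => cone_smul (cone_mem (h ha)) (hc a ha)

lemma cone_span {I : Finset V} {x : V} (h : x ∈ cone I) :
    x ∈ Submodule.span ℝ (I : Set V) := by
  obtain ⟨c, -, rfl⟩ := h
  exact Submodule.sum_mem _ fun a ha => Submodule.smul_mem _ _ (Submodule.subset_span ha)

lemma cone_convex (I : Finset V) : Convex ℝ (cone I) := by
  intro x hx y hy a b ha hb _
  exact cone_add (cone_smul hx ha) (cone_smul hy hb)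

lemma cone_dual_nonneg {I : Finset V} (f : V →ₗ[ℝ] ℝ) (hf : ∀ a ∈ I, 0 ≤ f a) {x : V}
    (hx : x ∈ cone I) : 0 ≤ f x := by
  obtain ⟨c, hc, rfl⟩ := hx
  rw [map_sum]
  refine Finset.sum_nonneg fun a ha => ?_
  rw [map_smul]
  exact mul_nonneg (hc a ha) (hf a ha)

lemma span_exists_coeff {I : Finset V} {x : V} (h : x ∈ Submodule.span ℝ (I : Set V)) :
    ∃ c : V → ℝ, x = ∑ a ∈ I, c a • a := by
  obtain ⟨c, -, hc⟩ := Submodule.mem_span_finset.1 h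
  exact ⟨c, hc.symm⟩

lemma face_add {C : Set V} {I : Finset V} {Δ : Finset V} (hC : C = cone Δ)
    (hF : IsFace C (cone I)) {x y : V} (hx : x ∈ cone Δ) (hy : y ∈ cone Δ)
    (hxy : x + y ∈ cone I) : x ∈ cone I := by
  subst hC
  have h := hF.2.2 ((2 : ℝ) • x) (cone_smul hx (by norm_num)) ((2 : ℝ) • y)
    (cone_smul hy (by norm_num)) (1 / 2) (by norm_num) (by norm_num) (by
      convert hxy using 1
      module)
  have := cone_smul h.1 (r := 1 / 2) (by norm_num)
  rwa [smul_smul, show (1 / 2 * 2 : ℝ) = 1 by norm_num, one_smul] at this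

/-- A point of the cone lying in the span of a face lies in the face. -/
lemma face_span {I Δ : Finset V} (hI : I ⊆ Δ) (hF : IsFace (cone Δ) (cone I)) {x : V}
    (hx : x ∈ cone Δ) (hxs : x ∈ Submodule.span ℝ (I : Set V)) : x ∈ cone I := by
  obtain ⟨c, hc⟩ := span_exists_coeff hxs
  refine face_add rfl hF hx (y := ∑ a ∈ I, |c a| • a) ?_ ?_
  · exact cone_mono hI ⟨fun a => |c a|, fun a _ => abs_nonneg _, rfl⟩
  · rw [hc, ← Finset.sum_add_distrib]
    refine ⟨fun a => c a + |c a|, fun a _ => by linarith [neg_abs_le (c a)], ?_⟩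
    simp [add_smul]

/-- The zero set of a non-negative functional is a face. -/
lemma face_of_dual [DecidableEq V] {Δ : Finset V} (f : V →ₗ[ℝ] ℝ) (hf : ∀ a ∈ Δ, 0 ≤ f a) :
    IsFace (cone Δ) (cone (Δ.filter fun a => f a = 0)) := by
  have key : ∀ x ∈ cone Δ, f x = 0 → x ∈ cone (Δ.filter fun a => f a = 0) := by
    rintro x ⟨c, hc, rfl⟩ h
    rw [map_sum] at h
    have h' := (Finset.sum_eq_zero_iff_of_nonneg (fun a ha => by
      rw [map_smul]; exact mul_nonneg (hc a ha) (hf a ha))).1 h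
    refine cone_sum _ _ fun a ha => ?_
    have := h' a ha
    rw [map_smul, smul_eq_mul, mul_eq_zero] at this
    rcases this with h0 | h0
    · rw [h0, zero_smul]; exact cone_zero _
    · exact cone_smul (cone_mem (by simp [ha, h0])) (hc a ha)
  refine ⟨cone_mono (Finset.filter_subset _ _), cone_convex _, ?_⟩
  intro x hx y hy t ht0 ht1 hxy
  have h0 : f (t • x + (1 - t) • y) = 0 := by
    obtain ⟨c, hc, h⟩ := hxy
    rw [h, map_sum]
    refine Finset.sum_eq_zero fun a ha => ?_
    rw [map_smul, (Finset.mem_filter.1 ha).2, smul_zero]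
  rw [map_add, map_smul, map_smul, smul_eq_mul, smul_eq_mul] at h0
  have hx0 := cone_dual_nonneg f hf hx
  have hy0 := cone_dual_nonneg f hf hy
  have h1t : 0 < 1 - t := by linarith
  have e1 : t * f x = 0 := by nlinarith [mul_nonneg ht0.le hx0, mul_nonneg h1t.le hy0]
  have e2 : (1 - t) * f y = 0 := by linarith
  exact ⟨key x hx ((mul_eq_zero.1 e1).resolve_left ht0.ne'),
    key y hy ((mul_eq_zero.1 e2).resolve_left h1t.ne')⟩

lemma face_trans {C F G : Set V} (h1 : IsFace C F) (h2 : IsFace F G) : IsFace C G := by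
  refine ⟨h2.1.trans h1.1, h2.2.1, ?_⟩
  intro x hx y hy t h0 ht hxy
  obtain ⟨a, b⟩ := h1.2.2 x hx y hy t h0 ht (h2.1 hxy)
  exact h2.2.2 x a y b t h0 ht hxy

lemma offdiag_nonpos {B : LinearMap.BilinForm ℝ V} {Δ : Finset V} (hΔ : IsRootBasis B Δ)
    {a b : V} (ha : a ∈ Δ) (hb : b ∈ Δ) (hab : a ≠ b) : B a b ≤ 0 := by
  rcases hΔ.offdiag a ha b hb hab with h | ⟨k, hk, h⟩
  · linarith
  · rw [h, neg_nonpos]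
    have hk2 : (2 : ℝ) ≤ k := by exact_mod_cast hk
    apply Real.cos_nonneg_of_neg_pi_div_two_le_of_le
    · have : 0 ≤ Real.pi / k := by positivity
      linarith [Real.pi_pos]
    · exact div_le_div_of_nonneg_left Real.pi_pos.le (by norm_num) hk2

/-- Simple roots are extremal. -/
lemma root_extremal {B : LinearMap.BilinForm ℝ V} {Δ I : Finset V} (hΔ : IsRootBasis B Δ)
    (hI : I ⊆ Δ) {a : V} (ha : a ∈ Δ) (hc : a ∈ cone I) : a ∈ I := by
  by_contra hn
  obtain ⟨c, hc, h⟩ := hc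
  have h1 := hΔ.unit a ha
  have h2 : B a a = ∑ b ∈ I, c b * B a b := by
    have := congrArg (B a) h
    simpa [map_sum] using this
  have h3 : ∑ b ∈ I, c b * B a b ≤ 0 := Finset.sum_nonpos fun b hb =>
    mul_nonpos_of_nonneg_of_nonpos (hc b hb)
      (offdiag_nonpos hΔ ha (hI hb) (fun e => hn (e ▸ hb)))
  linarith

lemma offspan {B : LinearMap.BilinForm ℝ V} {Δ I : Finset V} (hΔ : IsRootBasis B Δ)
    (hI : I ⊆ Δ) (hF : IsFace (cone Δ) (cone I)) {a : V} (ha : a ∈ Δ) (hn : a ∉ I) :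
    a ∉ Submodule.span ℝ (I : Set V) := fun h =>
  hn (root_extremal hΔ hI ha (face_span hI hF (cone_mem ha) h))

/-- Positive / negative part splitting: a face span containing a time-like vector has a
time-like vector in its cone. -/
lemma timelike_cone {B : LinearMap.BilinForm ℝ V} (hs : ∀ x y : V, B x y = B y x)
    {Δ I : Finset V} (hΔ : IsRootBasis B Δ)
    (hI : I ⊆ Δ) {z : V} (hz : z ∈ Submodule.span ℝ (I : Set V)) (hz0 : B z z < 0) :
    ∃ t ∈ cone I, B t t < 0 := by
  obtain ⟨c, hc⟩ := span_exists_coeff hz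
  set p := ∑ a ∈ I, (max (c a) 0) • a with hp
  set n := ∑ a ∈ I, (max (- c a) 0) • a with hn
  have hpc : p ∈ cone I := ⟨fun a => max (c a) 0, fun a _ => le_max_right _ _, rfl⟩
  have hnc : n ∈ cone I := ⟨fun a => max (- c a) 0, fun a _ => le_max_right _ _, rfl⟩
  have hzpn : z = p - n := by
    rw [hc, hp, hn, ← Finset.sum_sub_distrib]
    refine Finset.sum_congr rfl fun a _ => ?_
    rw [← sub_smul]
    congr 1
    rcases le_total (c a) 0 with h | h
    · rw [max_eq_right h, max_eq_left (by linarith)]; ring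
    · rw [max_eq_left h, max_eq_right (by linarith)]; ring
  have hpn : B p n ≤ 0 := by
    rw [hp, hn]
    simp only [map_sum, LinearMap.sum_apply, map_smul, LinearMap.smul_apply, smul_eq_mul,
      Finset.mul_sum]
    refine Finset.sum_nonpos fun a ha => Finset.sum_nonpos fun b hb => ?_
    by_cases hab : a = b
    · subst hab
      rcases le_total (c a) 0 with h | h
      · simp [max_eq_right h]
      · simp [max_eq_right (show -c a ≤ 0 by linarith)]
    · have h0 := offdiag_nonpos hΔ (hI hb) (hI ha) (Ne.symm hab)
      exact mul_nonpos_of_nonneg_of_nonpos (le_max_right _ _)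
        (mul_nonpos_of_nonneg_of_nonpos (le_max_right _ _) h0)
  have he : B z z = B p p + B n n - 2 * B p n := by
    rw [hzpn]; simp only [map_sub, LinearMap.sub_apply, hs n p]; ring
  by_cases h : B p p < 0
  · exact ⟨p, hpc, h⟩
  · exact ⟨n, hnc, by linarith⟩

end Cones

/-! ### Positivity of roots -/

section Positivity

/-- Fundamental positivity theorem. -/
lemma root_pos {B : LinearMap.BilinForm ℝ V} (hs : ∀ x y : V, B x y = B y x)
    {Δ : Finset V} (hΔ : IsRootBasis B Δ) (N : ℕ) : ∀ (l : List V), l.length = N →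
    (∀ γ ∈ l, γ ∈ Δ) → ∀ α ∈ Δ,
    (∀ l' : List V, (∀ γ ∈ l', γ ∈ Δ) → word B l' = word B l → l.length ≤ l'.length) →
    (∀ l' : List V, (∀ γ ∈ l', γ ∈ Δ) → word B l' = word B l ∘ₗ reflection B α →
      l.length ≤ l'.length) → word B l α ∈ cone Δ := by
  classical
  induction N using Nat.strong_induction_on with
  | _ N IH =>
  intro l hlN hl α hα h1 h2
  rcases List.eq_nil_or_concat l with rfl | ⟨l0, β, hl0⟩
  · exact cone_mem hα
  rw [List.concat_eq_append] at hl0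
  have hαu := hΔ.unit α hα
  have hβ : β ∈ Δ := hl β (by simp [hl0])
  have hβu := hΔ.unit β hβ
  have hl0Δ : ∀ γ ∈ l0, γ ∈ Δ := fun γ h => hl γ (by simp [hl0, h])
  have hne : α ≠ β := by
    rintro rfl
    have := h2 l0 hl0Δ (by
      rw [hl0, word_append, word_singleton, LinearMap.comp_assoc, reflection_invol hαu,
        LinearMap.comp_id])
    simp [hl0] at this
  -- decompositions
  let P : ℕ → Prop := fun n => ∃ v d : List V, v.length = n ∧ (∀ γ ∈ v, γ ∈ Δ) ∧
    (∀ γ ∈ d, γ = α ∨ γ = β) ∧ word B (v ++ d) = word B l ∧ v.length + d.length = l.length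
  have hP0 : P l0.length := ⟨l0, [β], rfl, hl0Δ, by simp, by rw [hl0], by simp [hl0]⟩
  have hex : ∃ n, P n := ⟨_, hP0⟩
  obtain ⟨v, d, hvn, hv, hd, hvd, hlen⟩ := Nat.find_spec hex
  have hmin : ∀ n, P n → v.length ≤ n := fun n hn => by rw [hvn]; exact Nat.find_min' hex hn
  have hvlt : v.length < N := by
    have := hmin _ hP0
    have : l.length = l0.length + 1 := by simp [hl0]
    omega
  have hdΔ : ∀ d' : List V, (∀ γ ∈ d', γ = α ∨ γ = β) → ∀ γ ∈ d', γ ∈ Δ := by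
    intro d' h γ hγ
    rcases h γ hγ with h | h <;> rw [h] <;> assumption
  have happΔ : ∀ l1 l2 : List V, (∀ γ ∈ l1, γ ∈ Δ) → (∀ γ ∈ l2, γ ∈ Δ) →
      ∀ γ ∈ l1 ++ l2, γ ∈ Δ := by
    intro l1 l2 a b γ hγ
    rcases List.mem_append.1 hγ with h | h
    exacts [a γ h, b γ h]
  have hvred : ∀ l' : List V, (∀ γ ∈ l', γ ∈ Δ) → word B l' = word B v →
      v.length ≤ l'.length := by
    intro l' hl' h
    have := h1 (l' ++ d) (happΔ _ _ hl' (hdΔ d hd)) (by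
      rw [word_append, h, ← word_append, hvd])
    simp only [List.length_append] at this
    omega
  have hvref : ∀ δ, (δ = α ∨ δ = β) → word B v δ ∈ cone Δ := by
    intro δ hδ
    have hδΔ : δ ∈ Δ := by rcases hδ with h | h <;> rw [h] <;> assumption
    have hδu := hΔ.unit δ hδΔ
    refine IH v.length hvlt v rfl hv δ hδΔ hvred ?_
    intro v' hv' h
    by_contra hlt
    push Not at hlt
    have hdd : ∀ γ ∈ δ :: d, γ = α ∨ γ = β := by
      intro γ hγ
      rcases List.mem_cons.1 hγ with rfl | hγ
      exacts [hδ, hd γ hγ]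
    have hw : word B (v' ++ δ :: d) = word B l := by
      rw [word_append, h, word, LinearMap.comp_assoc, ← LinearMap.comp_assoc (word B d),
        reflection_invol hδu, LinearMap.id_comp, ← word_append, hvd]
    have := h1 _ (happΔ _ _ hv' (hdΔ _ hdd)) hw
    simp only [List.length_append, List.length_cons] at this
    have := hmin v'.length ⟨v', δ :: d, rfl, hv', hdd, hw, by
      simp only [List.length_cons]; omega⟩
    omega
  obtain ⟨p, q, hp, hq, hpq⟩ := dihedral_pos hs hαu hβu (hΔ.offdiag α hα β hβ hne) d hd
    (fun d' hd' h => by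
      have := h1 (v ++ d') (happΔ _ _ hv (hdΔ _ hd')) (by
        rw [word_append, h, ← word_append, hvd])
      simp only [List.length_append] at this
      omega)
    (fun d' hd' h => by
      have := h2 (v ++ d') (happΔ _ _ hv (hdΔ _ hd')) (by
        rw [word_append, h, ← LinearMap.comp_assoc, ← word_append, hvd])
      simp only [List.length_append] at this
      omega)
  rw [← hvd, word_append, LinearMap.comp_apply, hpq, map_add, map_smul, map_smul]
  exact cone_add (cone_smul (hvref α (Or.inl rfl)) hp) (cone_smul (hvref β (Or.inr rfl)) hq)

/-- A word is reduced. -/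
def Red (B : LinearMap.BilinForm ℝ V) (Δ : Finset V) (l : List V) : Prop :=
  ∀ l' : List V, (∀ γ ∈ l', γ ∈ Δ) → word B l' = word B l → l.length ≤ l'.length

lemma red_init {B : LinearMap.BilinForm ℝ V} {Δ : Finset V} {l : List V} {α : V} (hα : α ∈ Δ)
    (h : Red B Δ (l ++ [α])) : Red B Δ l := by
  intro l' hl' hw
  have := h (l' ++ [α]) (by
    intro γ hγ
    rcases List.mem_append.1 hγ with h | h
    · exact hl' γ h
    · simp at h; rwa [h]) (by rw [word_append, hw, word_append])
  simpa using this

lemma red_root_pos {B : LinearMap.BilinForm ℝ V} (hs : ∀ x y : V, B x y = B y x)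
    {Δ : Finset V} (hΔ : IsRootBasis B Δ) {l : List V} (hl : ∀ γ ∈ l, γ ∈ Δ) {α : V}
    (hα : α ∈ Δ) (h : Red B Δ (l ++ [α])) : word B l α ∈ cone Δ := by
  refine root_pos hs hΔ _ l rfl hl α hα (red_init hα h) ?_
  intro l' hl' hw
  have := h l' hl' (by rw [hw, word_append, word_singleton])
  simp at this
  omega

lemma sub_word_mem {B : LinearMap.BilinForm ℝ V} (hs : ∀ x y : V, B x y = B y x)
    {Δ : Finset V} (hΔ : IsRootBasis B Δ) {ω : V} (hω : ∀ α ∈ Δ, 0 ≤ B α ω)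
    (l : List V) (hl : ∀ γ ∈ l, γ ∈ Δ) (hr : Red B Δ l) : ω - word B l ω ∈ cone Δ := by
  induction l using List.reverseRecOn with
  | nil => simpa [word] using cone_zero Δ
  | append_singleton l α ih =>
    have hα : α ∈ Δ := hl α (by simp)
    have hl' : ∀ γ ∈ l, γ ∈ Δ := fun γ h => hl γ (by simp [h])
    have h1 := ih hl' (red_init hα hr)
    have h2 := red_root_pos hs hΔ hl' hα hr
    have e : ω - word B (l ++ [α]) ω = (ω - word B l ω) + (2 * B α ω) • word B l α := by
      rw [word_append, word_singleton, LinearMap.comp_apply, reflection_apply, map_sub, map_smul]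
      abel
    rw [e]
    exact cone_add h1 (cone_smul h2 (by linarith [hω α hα]))

lemma sub_word_mem' {B : LinearMap.BilinForm ℝ V} (hs : ∀ x y : V, B x y = B y x)
    {Δ : Finset V} (hΔ : IsRootBasis B Δ) {ω : V} (hω : ∀ α ∈ Δ, 0 ≤ B α ω) (α₁ : V)
    (hα₁ : α₁ ∈ Δ)
    (l : List V) (hl : ∀ γ ∈ l, γ ∈ Δ) (hr : Red B Δ (α₁ :: l)) :
    ω - word B (α₁ :: l) ω - (2 * B α₁ ω) • α₁ ∈ cone Δ := by
  induction l using List.reverseRecOn with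
  | nil =>
    rw [word_singleton, reflection_apply]
    simpa using cone_zero Δ
  | append_singleton l α ih =>
    have hα : α ∈ Δ := hl α (by simp)
    have hl' : ∀ γ ∈ l, γ ∈ Δ := fun γ h => hl γ (by simp [h])
    rw [← List.cons_append] at hr ⊢
    have h1 := ih hl' (red_init hα hr)
    have h2 := red_root_pos hs hΔ (l := α₁ :: l) (by
      intro γ hγ
      rcases List.mem_cons.1 hγ with rfl | h
      exacts [hα₁, hl' γ h]) hα hr
    have e : ω - word B ((α₁ :: l) ++ [α]) ω - (2 * B α₁ ω) • α₁
        = (ω - word B (α₁ :: l) ω - (2 * B α₁ ω) • α₁) + (2 * B α ω) • word B (α₁ :: l) α := by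
      rw [word_append, word_singleton, LinearMap.comp_apply, reflection_apply, map_sub, map_smul]
      abel
    rw [e]
    exact cone_add h1 (cone_smul h2 (by linarith [hω α hα]))

lemma exists_red (B : LinearMap.BilinForm ℝ V) (Δ : Finset V) (l : List V)
    (hl : ∀ γ ∈ l, γ ∈ Δ) :
    ∃ l' : List V, (∀ γ ∈ l', γ ∈ Δ) ∧ word B l' = word B l ∧ Red B Δ l' ∧
      l'.length ≤ l.length := by
  classical
  have hex : ∃ n, ∃ l' : List V, l'.length = n ∧ (∀ γ ∈ l', γ ∈ Δ) ∧ word B l' = word B l :=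
    ⟨_, l, rfl, hl, rfl⟩
  obtain ⟨l', h1, h2, h3⟩ := Nat.find_spec hex
  refine ⟨l', h2, h3, ?_, ?_⟩
  · intro m hm hw
    rw [h1]; exact Nat.find_min' hex ⟨m, rfl, hm, hw.trans h3⟩
  · rw [h1]; exact Nat.find_min' hex ⟨l, rfl, hl, rfl⟩

/-- Key estimate for the orbit of a single vector of the chamber. -/
lemma orbit_estimate {B : LinearMap.BilinForm ℝ V} (hs : ∀ x y : V, B x y = B y x)
    {Δ : Finset V} (hΔ : IsRootBasis B Δ) {ω : V} (hω : ∀ α ∈ Δ, 0 ≤ B α ω)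
    (hq : ∀ α ∈ Δ, B α ω ≠ 0 → B ω ω ≤ B α ω ^ 2) (N : ℕ) :
    ∀ l : List V, l.length = N → (∀ γ ∈ l, γ ∈ Δ) →
      word B l ω = ω ∨ B ω (word B l ω) ≤ - B ω ω := by
  induction N using Nat.strong_induction_on with
  | _ N IH =>
  intro l0 hlN hl0
  obtain ⟨l, hl, hw, hr, hlen⟩ := exists_red B Δ l0 hl0
  rw [← hw]
  cases l with
  | nil => exact Or.inl rfl
  | cons α m =>
    have hα : α ∈ Δ := hl α (by simp)
    have hm : ∀ γ ∈ m, γ ∈ Δ := fun γ h => hl γ (by simp [h])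
    by_cases h0 : B α ω = 0
    · have hfix : reflection B α ω = ω := by simp [reflection_apply, h0]
      simp only [List.length_cons] at hlen
      simp only [word, LinearMap.comp_apply]
      rcases IH m.length (by omega) m rfl hm with h | h
      · left; rw [h, hfix]
      · right
        have := reflection_isom hs (hΔ.unit α hα) ω (word B m ω)
        rw [hfix] at this
        rw [this]; exact h
    · right
      have hmem := sub_word_mem' hs hΔ hω α hα m hm hr
      have := cone_dual_nonneg (B ω) (fun a ha => by rw [hs]; exact hω a ha) hmem
      simp only [map_sub, map_smul, smul_eq_mul, hs ω α] at this
      nlinarith [hq α hα h0]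

end Positivity

/-! ### Lorentz geometry -/

section Lorentz

lemma lorentz_pos {B : LinearMap.BilinForm ℝ V} (hs : ∀ x y : V, B x y = B y x)
    (hL : IsLorentz B) {z : V} (hz : B z z < 0) {x : V} (hxz : B z x = 0) (hx : x ≠ 0) :
    0 < B x x := by
  have hnn : ∀ y, B z y = 0 → 0 ≤ B y y := by
    intro y hy
    by_contra hneg
    push Not at hneg
    have h := hL.2.2 (Submodule.span ℝ {z, y}) (by
      intro v hv hv0
      obtain ⟨a, b, rfl⟩ := Submodule.mem_span_pair.1 hv
      have e : B (a • z + b • y) (a • z + b • y) = a ^ 2 * B z z + b ^ 2 * B y y := by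
        simp only [map_add, map_smul, LinearMap.add_apply, LinearMap.smul_apply, smul_eq_mul,
          hs y z, hy]
        ring
      rw [e]
      by_cases ha : a = 0
      · have hb : b ≠ 0 := by rintro rfl; simp [ha] at hv0
        have : 0 < b ^ 2 := by positivity
        rw [ha]; nlinarith
      · have : 0 < a ^ 2 := by positivity
        nlinarith [sq_nonneg b])
    have hli : LinearIndependent ℝ ![z, y] := by
      rw [LinearIndependent.pair_iff]
      intro s t hst
      have h1 := congrArg (B z) hst
      have h2 := congrArg (B y) hst
      simp only [map_add, map_smul, smul_eq_mul, hs y z, hy, map_zero, mul_zero, add_zero,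
        zero_add] at h1 h2
      exact ⟨(mul_eq_zero.1 h1).resolve_right hz.ne, (mul_eq_zero.1 h2).resolve_right hneg.ne⟩
    have hr := finrank_span_eq_card hli
    have hrange : Set.range ![z, y] = {z, y} := by
      simp only [Matrix.range_cons, Matrix.range_empty, Set.union_empty, Set.singleton_union]
    rw [hrange, Fintype.card_fin] at hr
    omega
  refine lt_of_le_of_ne (hnn x hxz) fun h0 => hx ?_
  have hrad : ∀ y, B x y = 0 := by
    have h1 : ∀ y, B z y = 0 → B x y = 0 := by
      intro y hy
      by_contra hne
      -- B (y + r x) = B y y + 2 r B x y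
      have h := hnn (y + (- (B y y + 1) / (2 * B x y)) • x) (by simp [hy, hxz])
      have e : B (y + (- (B y y + 1) / (2 * B x y)) • x) (y + (- (B y y + 1) / (2 * B x y)) • x)
          = -1 := by
        simp only [map_add, map_smul, LinearMap.add_apply, LinearMap.smul_apply, smul_eq_mul,
          hs y x, ← h0]
        field_simp
        ring
      linarith
    intro y
    have h2 := h1 (y - (B z y / B z z) • z) (by
      simp only [map_sub, map_smul, smul_eq_mul]
      field_simp [hz.ne]
      ring)
    simp only [map_sub, map_smul, smul_eq_mul, hs x z, hxz, mul_zero, sub_zero] at h2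
    exact h2
  exact hL.1.1 x hrad

/-- Two non-space-like vectors in the nappe determined by `t`. -/
lemma nappe {B : LinearMap.BilinForm ℝ V} (hs : ∀ x y : V, B x y = B y x)
    (hL : IsLorentz B) {t u v : V} (ht : B t t < 0) (hu : B u u ≤ 0) (hv : B v v ≤ 0)
    (hut : B u t < 0) (hvt : B v t < 0) : B u v < 0 ∨ ∃ r : ℝ, 0 < r ∧ v = r • u := by
  set r := B v t / B u t with hr
  have hr0 : 0 < r := div_pos_of_neg_of_neg hvt hut
  by_cases hvu : v = r • u
  · exact Or.inr ⟨r, hr0, hvu⟩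
  left
  have h := lorentz_pos hs hL ht (x := v - r • u) (by
    rw [hs]
    simp only [map_sub, map_smul, LinearMap.sub_apply, LinearMap.smul_apply, smul_eq_mul, hr]
    field_simp [hut.ne]
    ring) (sub_ne_zero.2 hvu)
  simp only [map_sub, map_smul, LinearMap.sub_apply, LinearMap.smul_apply, smul_eq_mul,
    hs v u] at h
  nlinarith [mul_nonneg (sq_nonneg r) (neg_nonneg.2 hu)]

/-- A Perron-Frobenius argument: there is a time-like vector whose negative is in the chamber. -/
lemma perron {B : LinearMap.BilinForm ℝ V} (hs : ∀ x y : V, B x y = B y x)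
    {Δ : Finset V} (hΔ : IsRootBasis B Δ) (hL : IsLorentz B) :
    ∃ v : V, B v v < 0 ∧ ∀ a ∈ Δ, B v a ≤ 0 := by
  classical
  let T : (Δ → ℝ) → V := fun c => ∑ a, c a • (a : V)
  let F : (Δ → ℝ) → ℝ := fun c => ∑ a, ∑ b, c a * c b * B a b
  have hF : ∀ c, B (T c) (T c) = F c := by
    intro c
    simp only [T, F, map_sum, LinearMap.sum_apply, map_smul, LinearMap.smul_apply, smul_eq_mul]
    refine Finset.sum_congr rfl fun a _ => ?_
    try rw [Finset.mul_sum]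
    refine Finset.sum_congr rfl fun b _ => ?_
    rw [hs b a]; ring
  let S : Set (Δ → ℝ) := {c | ∑ a, c a ^ 2 = 1}
  have hSc : IsCompact S := by
    refine IsCompact.of_isClosed_subset (isCompact_Icc (a := fun _ => (-1 : ℝ))
      (b := fun _ => (1 : ℝ))) ?_ ?_
    · exact isClosed_eq (by fun_prop) continuous_const
    · intro c hc
      have h : ∀ a, c a ^ 2 ≤ 1 := fun a => by
        have hc' : ∑ a, c a ^ 2 = 1 := hc
        rw [← hc']
        exact Finset.single_le_sum (f := fun a => c a ^ 2) (fun i _ => sq_nonneg _)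
          (Finset.mem_univ a)
      exact ⟨fun a => (abs_le.1 ((sq_le_one_iff_abs_le_one _).1 (h a))).1,
        fun a => (abs_le.1 ((sq_le_one_iff_abs_le_one _).1 (h a))).2⟩
  obtain ⟨z, hz⟩ := hL.2.1
  obtain ⟨c0, hc0⟩ := span_exists_coeff (I := Δ) (x := z) (by rw [hΔ.spans]; trivial)
  have hzT : z = T fun a => c0 a := by
    rw [hc0]; exact (Finset.sum_coe_sort Δ (fun a => c0 a • a)).symm
  have hFs : ∀ (r : ℝ) c, F (fun a => r * c a) = r ^ 2 * F c := by
    intro r c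
    simp only [F, Finset.mul_sum]
    refine Finset.sum_congr rfl fun a _ => Finset.sum_congr rfl fun b _ => ?_
    ring
  have hnorm : ∀ c : Δ → ℝ, c ≠ 0 → 0 < ∑ a, c a ^ 2 := by
    intro c hc
    obtain ⟨a, ha⟩ := Function.ne_iff.1 hc
    refine lt_of_lt_of_le (b := c a ^ 2) ?_ (Finset.single_le_sum (f := fun a => c a ^ 2)
      (fun i _ => sq_nonneg _) (Finset.mem_univ a))
    simp only [Pi.zero_apply] at ha
    positivity
  have hunit : ∀ c : Δ → ℝ, c ≠ 0 → (fun a => (√(∑ a, c a ^ 2))⁻¹ * c a) ∈ S := by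
    intro c hc
    have h := hnorm c hc
    change ∑ a, ((√(∑ a, c a ^ 2))⁻¹ * c a) ^ 2 = 1
    simp only [mul_pow, ← Finset.mul_sum, inv_pow, Real.sq_sqrt h.le]
    exact inv_mul_cancel₀ h.ne'
  have hc0ne : (fun a : Δ => c0 a) ≠ 0 := by
    intro h
    rw [h] at hzT
    rw [hzT] at hz
    simp [T] at hz
  have hFc : Continuous F := by
    simp only [F]; fun_prop
  obtain ⟨c, hcS, hcmin⟩ := hSc.exists_isMinOn ⟨_, hunit _ hc0ne⟩ hFc.continuousOn
  have hmin : ∀ d ∈ S, F c ≤ F d := fun d hd => hcmin hd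
  -- pass to absolute values
  set e : Δ → ℝ := fun a => |c a| with he
  have heS : e ∈ S := by
    change ∑ a, |c a| ^ 2 = 1
    simp only [sq_abs]; exact hcS
  have hFe : F e ≤ F c := by
    refine Finset.sum_le_sum fun a _ => Finset.sum_le_sum fun b _ => ?_
    by_cases hab : a = b
    · subst hab; simp [he]
    · have h := offdiag_nonpos hΔ a.2 b.2 (fun h => hab (Subtype.ext h))
      have h2 : c a * c b ≤ |c a| * |c b| := by rw [← abs_mul]; exact le_abs_self _
      exact mul_le_mul_of_nonpos_right h2 h
  have hmin' : ∀ d ∈ S, F e ≤ F d := fun d hd => hFe.trans (hmin d hd)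
  have hhom : ∀ d : Δ → ℝ, F e * ∑ a, d a ^ 2 ≤ F d := by
    intro d
    by_cases hd : d = 0
    · subst hd; simp [F]
    · have h1 := hmin' _ (hunit d hd)
      rw [hFs, inv_pow, Real.sq_sqrt (hnorm d hd).le, inv_mul_eq_div,
        le_div_iff₀ (hnorm d hd)] at h1
      exact h1
  have hneg : F e < 0 := by
    have h1 := hhom (fun a => c0 a)
    rw [← hF (fun a => c0 a), ← hzT] at h1
    by_contra h
    push Not at h
    have := mul_nonneg h (hnorm _ hc0ne).le
    linarith
  refine ⟨T e, by rw [hF]; exact hneg, ?_⟩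
  intro b hb
  by_contra hpos
  push Not at hpos
  -- perturb
  have hpert : ∀ ε : ℝ, F e * (∑ a, (e a + ε * if a = ⟨b, hb⟩ then 1 else 0) ^ 2) ≤
      F e + 2 * ε * B (T e) b + ε ^ 2 := by
    intro ε
    have h1 := hhom (fun a => e a + ε * if a = ⟨b, hb⟩ then 1 else 0)
    rw [← hF (fun a => e a + ε * if a = ⟨b, hb⟩ then 1 else 0)] at h1
    have hT : T (fun a => e a + ε * if a = ⟨b, hb⟩ then 1 else 0) = T e + ε • b := by
      simp [T, add_smul, Finset.sum_add_distrib, mul_ite, ite_smul]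
    rw [hT] at h1
    simp only [map_add, map_smul, LinearMap.add_apply, LinearMap.smul_apply, smul_eq_mul,
      hs b (T e), hΔ.unit b hb, hF e] at h1
    linarith
  have hsum : ∀ ε : ℝ, ∑ a, (e a + ε * if a = ⟨b, hb⟩ then 1 else 0) ^ 2 =
      1 + 2 * ε * e ⟨b, hb⟩ + ε ^ 2 := by
    intro ε
    have heS' : ∑ a, e a ^ 2 = 1 := heS
    have : ∀ a, (e a + ε * if a = ⟨b, hb⟩ then 1 else 0) ^ 2 =
        e a ^ 2 + if a = ⟨b, hb⟩ then 2 * ε * e a + ε ^ 2 else 0 := by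
      intro a; split_ifs <;> ring
    simp only [this, Finset.sum_add_distrib, heS', Finset.sum_ite_eq', Finset.mem_univ, if_true]
    ring
  have hk : ∀ ε : ℝ, 0 ≤ 2 * ε * (B (T e) b - F e * e ⟨b, hb⟩) + ε ^ 2 * (1 - F e) := by
    intro ε
    have := hpert ε
    rw [hsum] at this
    nlinarith
  set D := B (T e) b - F e * e ⟨b, hb⟩ with hD
  have hDpos : 0 < D := by
    have : 0 ≤ e ⟨b, hb⟩ := abs_nonneg _
    nlinarith
  have h1 : 0 < 1 - F e := by linarith
  have h2 := hk (- D / (1 - F e))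
  have h3 : 2 * (- D / (1 - F e)) * D + (- D / (1 - F e)) ^ 2 * (1 - F e) =
      - (D ^ 2 / (1 - F e)) := by
    field_simp; ring
  rw [h3] at h2
  have : 0 < D ^ 2 / (1 - F e) := by positivity
  linarith

end Lorentz

/-! ### Polyhedral geometry -/

section Polyhedral

variable [FiniteDimensional ℝ V]

lemma exists_sep (S : Submodule ℝ V) {x : V} (hx : x ∉ S) :
    ∃ g : V →ₗ[ℝ] ℝ, g x ≠ 0 ∧ ∀ y ∈ S, g y = 0 := by
  obtain ⟨g, h1, h2⟩ := Submodule.exists_le_ker_of_notMem hx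
  exact ⟨g, h1, fun y hy => LinearMap.mem_ker.1 (h2 hy)⟩

lemma extreme_dual [DecidableEq V] (I : Finset V) {z : V}
    (N : ℕ) : ∀ f : V →ₗ[ℝ] ℝ, z ∈ Submodule.span ℝ (I : Set V) → (∀ a ∈ I, 0 ≤ f a) → f z < 0 →
    Module.finrank ℝ (Submodule.span ℝ (I : Set V)) -
      Module.finrank ℝ (Submodule.span ℝ ((I.filter fun a => f a = 0 : Finset V) : Set V)) = N →
    ∃ f : V →ₗ[ℝ] ℝ, (∀ a ∈ I, 0 ≤ f a) ∧ f z < 0 ∧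
      Module.finrank ℝ (Submodule.span ℝ ((I.filter fun a => f a = 0 : Finset V) : Set V)) + 1
        = Module.finrank ℝ (Submodule.span ℝ (I : Set V)) := by
  induction N using Nat.strong_induction_on with
  | _ N IH =>
  intro f hz hf hfz hN
  set K := I.filter fun a => f a = 0 with hK
  set U := Submodule.span ℝ (I : Set V) with hU
  set S := Submodule.span ℝ (K : Set V) with hS
  have hSU : S ≤ U := Submodule.span_mono (by
    intro a ha; exact (Finset.mem_filter.1 ha).1)
  have hSf : ∀ y ∈ S, f y = 0 := by
    intro y hy
    have : S ≤ LinearMap.ker f := Submodule.span_le.2 (by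
      intro a ha; exact (Finset.mem_filter.1 ha).2)
    exact this hy
  have hlt : S < U := lt_of_le_of_ne hSU (fun h => by
    rw [← h] at hz; linarith [hSf z hz])
  have hfr := Submodule.finrank_lt_finrank_of_lt hlt
  by_cases hcod : Module.finrank ℝ S + 1 = Module.finrank ℝ U
  · exact ⟨f, hf, hfz, hcod⟩
  -- codimension at least two
  set S' := S ⊔ Submodule.span ℝ {z} with hS'
  have hS'fr : Module.finrank ℝ S' ≤ Module.finrank ℝ S + 1 := by
    refine (Submodule.finrank_add_le_finrank_add_finrank _ _).trans ?_
    have := finrank_span_singleton (K := ℝ) (v := z) (fun h => by simp [h] at hfz)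
    omega
  obtain ⟨b, hbI, hbS⟩ : ∃ b ∈ I, b ∉ S' := by
    by_contra hcon
    push Not at hcon
    have : U ≤ S' := Submodule.span_le.2 hcon
    have := Submodule.finrank_mono this
    omega
  obtain ⟨g0, hg0b, hg0S⟩ := exists_sep S' hbS
  obtain ⟨g, hgb, hgS⟩ : ∃ g : V →ₗ[ℝ] ℝ, g b < 0 ∧ ∀ y ∈ S', g y = 0 := by
    rcases lt_or_gt_of_ne hg0b with h | h
    · exact ⟨g0, h, hg0S⟩
    · exact ⟨-g0, by simpa using h, fun y hy => by simp [hg0S y hy]⟩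
  have hgz : g z = 0 := hgS z (Submodule.mem_sup_right (Submodule.mem_span_singleton_self z))
  obtain ⟨m, hm, hmin⟩ := Finset.exists_min_image (I.filter fun a => g a < 0)
    (fun a => f a / (- g a)) ⟨b, by simp [hbI, hgb]⟩
  obtain ⟨hmI, hgm⟩ := Finset.mem_filter.1 hm
  set r := f m / (- g m) with hr
  have hr0 : 0 ≤ r := div_nonneg (hf m hmI) (by linarith)
  set f' : V →ₗ[ℝ] ℝ := f + r • g with hf'
  have hf'ap : ∀ x, f' x = f x + r * g x := fun x => by simp [hf']
  have hf'nn : ∀ a ∈ I, 0 ≤ f' a := by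
    intro a ha
    rw [hf'ap]
    rcases lt_or_ge (g a) 0 with h | h
    · have h1 := hmin a (by simp [ha, h])
      rw [le_div_iff₀ (by linarith)] at h1
      linarith
    · have := mul_nonneg hr0 h
      linarith [hf a ha]
  have hf'z : f' z < 0 := by rw [hf'ap, hgz]; linarith
  have hf'm : f' m = 0 := by
    rw [hf'ap, hr]
    field_simp [hgm.ne]
    ring
  have hmS : m ∉ S := fun h => by
    have := hgS m (Submodule.mem_sup_left h)
    linarith
  have hSlt : S < Submodule.span ℝ ((I.filter fun a => f' a = 0 : Finset V) : Set V) := by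
    refine lt_of_le_of_ne (Submodule.span_mono ?_) ?_
    · intro a ha
      have haK := Finset.mem_filter.1 (Finset.mem_coe.1 ha)
      have : g a = 0 := hgS a (Submodule.mem_sup_left (Submodule.subset_span ha))
      simp [haK.1, hf'ap, haK.2, this]
    · intro h
      apply hmS
      rw [h]
      exact Submodule.subset_span (by simp [hmI, hf'm])
  have hfr' := Submodule.finrank_lt_finrank_of_lt hSlt
  exact IH _ (by omega) f' hz hf'nn hf'z rfl

/-- In a level two system, the chamber of a Lorentzian facet has no space-like vectors. -/
lemma facet_chamber {B : LinearMap.BilinForm ℝ V} (hs : ∀ x y : V, B x y = B y x)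
    {Δ I : Finset V} (hΔ : IsRootBasis B Δ) (hI : IsFacial Δ I 1) (hlev : LevelLE B Δ 2)
    {z : V} (hz : z ∈ Submodule.span ℝ (I : Set V)) (hz0 : B z z < 0)
    {p : V} (hp : p ∈ Submodule.span ℝ (I : Set V)) (hpI : ∀ a ∈ I, 0 ≤ B p a) :
    B p p ≤ 0 := by
  classical
  by_contra hpp
  push Not at hpp
  obtain ⟨t, htI, ht⟩ := timelike_cone hs hΔ hI.1 hz hz0
  have htp : 0 ≤ B p t := cone_dual_nonneg (B p) hpI htI
  set s0 := B p t / B p p with hs0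
  have hs0n : 0 ≤ s0 := div_nonneg htp hpp.le
  have hs0e : s0 * B p p = B p t := by rw [hs0]; field_simp
  -- value of the quadratic along the line
  have hquad : ∀ r : ℝ, B (t - r • p) (t - r • p) = B t t - 2 * r * B p t + r ^ 2 * B p p := by
    intro r
    simp only [map_sub, map_smul, LinearMap.sub_apply, LinearMap.smul_apply, smul_eq_mul, hs t p]
    ring
  obtain ⟨δ, hδ, hδs⟩ : ∃ δ : ℝ, 0 < δ ∧ δ ^ 2 * B p p < - B t t := by
    refine ⟨√(- B t t / (2 * B p p)), Real.sqrt_pos.2 (by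
      apply div_pos <;> linarith), ?_⟩
    rw [Real.sq_sqrt (by apply div_nonneg <;> linarith)]
    field_simp
    linarith
  have htime : ∀ r : ℝ, 0 ≤ r → r ≤ s0 + δ → B (t - r • p) (t - r • p) < 0 := by
    intro r h0 h1
    rw [hquad, ← hs0e]
    rcases le_total r s0 with h | h
    · nlinarith [mul_nonneg (mul_nonneg h0 (show 0 ≤ 2 * s0 - r by linarith)) hpp.le]
    · have h2 : (r - s0) ^ 2 ≤ δ ^ 2 := by
        apply sq_le_sq' <;> linarith
      nlinarith [mul_le_mul_of_nonneg_right h2 hpp.le, mul_nonneg (sq_nonneg s0) hpp.le]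
  set y := t - (s0 + δ) • p with hy
  have hyI : y ∈ Submodule.span ℝ (I : Set V) :=
    Submodule.sub_mem _ (cone_span htI) (Submodule.smul_mem _ _ hp)
  have hpy : B p y < 0 := by
    rw [hy]; simp only [map_sub, map_smul, smul_eq_mul]
    nlinarith [mul_pos hδ hpp]
  obtain ⟨f, hf, hfy, hfr⟩ := extreme_dual I _ (B p) hyI hpI hpy rfl
  set K := I.filter fun a => f a = 0 with hK
  have hKf : IsFacial Δ K 2 := by
    refine ⟨(Finset.filter_subset _ _).trans hI.1, face_trans hI.2.1 (face_of_dual f hf), ?_⟩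
    have := hI.2.2
    omega
  have hft : 0 ≤ f t := cone_dual_nonneg f hf htI
  have hfye : f y = f t - (s0 + δ) * f p := by simp [hy]
  have hfp : 0 < f p := by
    by_contra h
    push Not at h
    nlinarith [mul_nonneg (show 0 ≤ s0 + δ by linarith) (neg_nonneg.2 h)]
  set r := f t / f p with hr
  have hr0 : 0 ≤ r := div_nonneg hft hfp.le
  have hr1 : r ≤ s0 + δ := by
    rw [hr, div_le_iff₀ hfp]; linarith
  set x := t - r • p with hx
  have hfx : f x = 0 := by
    rw [hx, map_sub, map_smul, smul_eq_mul, hr]; field_simp; ring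
  have hxI : x ∈ Submodule.span ℝ (I : Set V) :=
    Submodule.sub_mem _ (cone_span htI) (Submodule.smul_mem _ _ hp)
  have hKle : Submodule.span ℝ (K : Set V) ≤
      Submodule.span ℝ (I : Set V) ⊓ LinearMap.ker f := by
    refine le_inf (Submodule.span_mono fun a ha => (Finset.mem_filter.1 ha).1) ?_
    exact Submodule.span_le.2 fun a ha => (Finset.mem_filter.1 ha).2
  have hlt : Submodule.span ℝ (I : Set V) ⊓ LinearMap.ker f < Submodule.span ℝ (I : Set V) := by
    refine lt_of_le_of_ne inf_le_left fun h => ?_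
    rw [← h] at hyI
    have := LinearMap.mem_ker.1 hyI.2
    linarith
  have hfrlt := Submodule.finrank_lt_finrank_of_lt hlt
  have heq : Submodule.span ℝ (K : Set V) = Submodule.span ℝ (I : Set V) ⊓ LinearMap.ker f :=
    Submodule.eq_of_le_of_finrank_le hKle (by omega)
  have := hlev K hKf x (by rw [heq]; exact ⟨hxI, hfx⟩)
  linarith [htime r hr0 hr1]

/-- A non-negative functional with zero set of codimension one gives a weight. -/
lemma make_weight [DecidableEq V] {B : LinearMap.BilinForm ℝ V} (hs : ∀ x y : V, B x y = B y x)
    {Δ : Finset V} (hΔ : IsRootBasis B Δ) (hL : IsLorentz B) (f : V →ₗ[ℝ] ℝ)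
    (hf : ∀ a ∈ Δ, 0 ≤ f a)
    (hfr : Module.finrank ℝ (Submodule.span ℝ ((Δ.filter fun a => f a = 0 : Finset V) : Set V))
      + 1 = Module.finrank ℝ V) :
    ∃ (ω : V) (c : ℝ), 0 < c ∧ (∀ x, B ω x = c * f x) ∧
      IsWeight B Δ (Δ.filter fun a => f a = 0) ω := by
  obtain ⟨b, hb, hfb⟩ : ∃ b ∈ Δ, f b ≠ 0 := by
    by_contra hcon
    push Not at hcon
    rw [Finset.filter_true_of_mem hcon, hΔ.spans, finrank_top] at hfr
    omega
  obtain ⟨m, hm, hmin⟩ := Finset.exists_min_image (Δ.filter fun a => f a ≠ 0) f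
    ⟨b, by simp [hb, hfb]⟩
  obtain ⟨hmΔ, hfm⟩ := Finset.mem_filter.1 hm
  have hfm0 : 0 < f m := lt_of_le_of_ne (hf m hmΔ) (Ne.symm hfm)
  obtain ⟨ω0, hω0⟩ : ∃ ω0, B ω0 = f := by
    have hinj : Function.Injective B := by
      rw [← LinearMap.ker_eq_bot, LinearMap.ker_eq_bot']
      intro x hx
      exact hL.1.1 x (fun y => by rw [hx]; rfl)
    have : Module.finrank ℝ V = Module.finrank ℝ (V →ₗ[ℝ] ℝ) := Subspace.dual_finrank_eq.symm
    exact (LinearMap.injective_iff_surjective_of_finrank_eq_finrank this).1 hinj f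
  have hval : ∀ x, B ((f m)⁻¹ • ω0) x = (f m)⁻¹ * f x := by
    intro x; simp [hω0]
  have hval' : ∀ x, B x ((f m)⁻¹ • ω0) = (f m)⁻¹ * f x := by
    intro x; rw [hs, hval]
  have hge : ∀ α ∈ Δ, α ∉ (Δ.filter fun a => f a = 0) → 1 ≤ B α ((f m)⁻¹ • ω0) := by
    intro α hα hn
    have hne : f α ≠ 0 := fun h => hn (by simp [hα, h])
    have := hmin α (by simp [hα, hne])
    rw [hval', inv_mul_eq_div, le_div_iff₀ hfm0]
    linarith
  refine ⟨(f m)⁻¹ • ω0, (f m)⁻¹, by positivity, hval,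
    ⟨Finset.filter_subset _ _, face_of_dual f hf, hfr⟩, ?_, ?_, hge, m, hmΔ, ?_, ?_⟩
  · intro α hα
    rw [hval', (Finset.mem_filter.1 hα).2, mul_zero]
  · intro α hα hn
    linarith [hge α hα hn]
  · simp [hfm]
  · rw [hval']; field_simp

lemma facial_weight {B : LinearMap.BilinForm ℝ V} (hs : ∀ x y : V, B x y = B y x)
    {Δ I : Finset V} (hΔ : IsRootBasis B Δ) (hL : IsLorentz B) (hI : IsFacial Δ I 1) :
    ∃ ω, IsWeight B Δ I ω := by
  classical
  obtain ⟨hIΔ, hF, hfr⟩ := hI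
  obtain ⟨b, hb⟩ : ∃ b, b ∉ Submodule.span ℝ (I : Set V) := by
    by_contra hcon
    push Not at hcon
    rw [(Submodule.eq_top_iff').2 hcon, finrank_top] at hfr
    omega
  obtain ⟨f0, hf0b, hf0⟩ := exists_sep _ hb
  -- the kernel
  have hker : ∀ f : V →ₗ[ℝ] ℝ, f b ≠ 0 → (∀ y ∈ Submodule.span ℝ (I : Set V), f y = 0) →
      ∀ x, f x = 0 → x ∈ Submodule.span ℝ (I : Set V) := by
    intro f hfb hf x hx
    have hle : Submodule.span ℝ (I : Set V) ≤ LinearMap.ker f := fun y hy => hf y hy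
    have hlt : Module.finrank ℝ (LinearMap.ker f) < Module.finrank ℝ V :=
      Submodule.finrank_lt (fun h => hfb (by
        have : b ∈ LinearMap.ker f := by rw [h]; trivial
        exact this))
    rw [Submodule.eq_of_le_of_finrank_le hle (by omega)]
    exact hx
  have hsign : ∀ a ∈ Δ, ∀ c ∈ Δ, 0 < f0 a → f0 c < 0 → False := by
    intro a ha c hc h1 h2
    have hx := cone_smul (cone_mem ha) (r := - f0 c) (by linarith)
    have hy := cone_smul (cone_mem hc) (r := f0 a) h1.le
    have hsp : (- f0 c) • a + f0 a • c ∈ Submodule.span ℝ (I : Set V) := by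
      refine hker f0 hf0b hf0 _ ?_
      simp; ring
    have hcI := face_add rfl hF hx hy (face_span hIΔ hF (cone_add hx hy) hsp)
    have := hf0 _ (cone_span hcI)
    simp only [map_smul, smul_eq_mul] at this
    nlinarith
  obtain ⟨f, hfb, hf, hfnn⟩ : ∃ f : V →ₗ[ℝ] ℝ, f b ≠ 0 ∧
      (∀ y ∈ Submodule.span ℝ (I : Set V), f y = 0) ∧ ∀ a ∈ Δ, 0 ≤ f a := by
    by_cases h : ∃ a ∈ Δ, 0 < f0 a
    · obtain ⟨a, ha, h⟩ := h
      refine ⟨f0, hf0b, hf0, fun c hc => ?_⟩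
      by_contra h'
      push Not at h'
      exact hsign a ha c hc h h'
    · push Not at h
      exact ⟨-f0, by simpa using hf0b, fun y hy => by simp [hf0 y hy], fun a ha => by
        simpa using h a ha⟩
  have hIeq : (Δ.filter fun a => f a = 0) = I := by
    ext a
    simp only [Finset.mem_filter]
    constructor
    · rintro ⟨ha, h⟩
      by_contra hn
      exact offspan hΔ hIΔ hF ha hn (hker f hfb hf a h)
    · intro ha
      exact ⟨hIΔ ha, hf a (Submodule.subset_span ha)⟩
  obtain ⟨ω, c, -, -, hω⟩ := make_weight hs hΔ hL f hfnn (by rw [hIeq]; exact hfr)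
  exact ⟨ω, hIeq ▸ hω⟩

end Polyhedral

section Main

variable [FiniteDimensional ℝ V]

lemma exists_min_rel {ι : Type*} [DecidableEq ι] (R : ι → ι → Prop) (s : Finset ι)
    (hs : s.Nonempty)
    (htot : ∀ a ∈ s, ∀ b ∈ s, R a b ∨ R b a)
    (htr : ∀ a ∈ s, ∀ b ∈ s, ∀ c ∈ s, R a b → R b c → R a c) :
    ∃ a ∈ s, ∀ b ∈ s, R a b := by
  induction hs using Finset.Nonempty.cons_induction with
  | singleton a =>
    refine ⟨a, by simp, fun b hb => ?_⟩
    rw [Finset.mem_singleton.1 hb]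
    exact (htot a (by simp) a (by simp)).elim id id
  | cons a s ha hs ih =>
    obtain ⟨m, hm, hmin⟩ := ih (fun x hx y hy => htot x (by simp [hx]) y (by simp [hy]))
      (fun x hx y hy z hz => htr x (by simp [hx]) y (by simp [hy]) z (by simp [hz]))
    have haa : R a a := (htot a (by simp) a (by simp)).elim id id
    rcases htot a (by simp) m (by simp [hm]) with h | h
    · refine ⟨a, by simp, fun b hb => ?_⟩
      rcases Finset.mem_cons.1 hb with rfl | hb'
      · exact haa
      · exact htr a (by simp) m (by simp [hm]) b hb h (hmin b hb')
    · refine ⟨m, by simp [hm], fun b hb => ?_⟩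
      rcases Finset.mem_cons.1 hb with rfl | hb'
      · exact h
      · exact hmin b hb'

/-- A face of codimension two gives two non-proportional weights orthogonal to it. -/
lemma ridge {B : LinearMap.BilinForm ℝ V} (hs : ∀ x y : V, B x y = B y x)
    {Δ K : Finset V} (hΔ : IsRootBasis B Δ) (hL : IsLorentz B) (hK : IsFacial Δ K 2) :
    ∃ ω₀ ∈ weights B Δ, ∃ ω₁ ∈ weights B Δ,
      (∀ x ∈ Submodule.span ℝ (K : Set V), B ω₀ x = 0) ∧
      (∀ x ∈ Submodule.span ℝ (K : Set V), B ω₁ x = 0) ∧ ∀ c : ℝ, ω₀ ≠ c • ω₁ := by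
  classical
  obtain ⟨hKΔ, hF, hfr⟩ := hK
  set S := Submodule.span ℝ (K : Set V) with hS
  have hq : Module.finrank ℝ (V ⧸ S) = 2 := by
    have := Submodule.finrank_quotient_add_finrank S
    omega
  let bas := Module.finBasisOfFinrankEq ℝ (V ⧸ S) hq
  let f : V →ₗ[ℝ] ℝ := bas.coord 0 ∘ₗ S.mkQ
  let g : V →ₗ[ℝ] ℝ := bas.coord 1 ∘ₗ S.mkQ
  have hker : ∀ x, f x = 0 → g x = 0 → x ∈ S := by
    intro x h1 h2
    rw [← Submodule.Quotient.mk_eq_zero S]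
    refine bas.ext_elem fun i => ?_
    fin_cases i
    · simpa [f] using h1
    · simpa [g] using h2
  have hfS : ∀ x ∈ S, f x = 0 := by
    intro x hx
    simp [f, (Submodule.Quotient.mk_eq_zero S).2 hx]
  have hgS : ∀ x ∈ S, g x = 0 := by
    intro x hx
    simp [g, (Submodule.Quotient.mk_eq_zero S).2 hx]
  obtain ⟨e0, he0⟩ := S.mkQ_surjective (bas 0)
  obtain ⟨e1, he1⟩ := S.mkQ_surjective (bas 1)
  have hf0 : f e0 = 1 := by simp only [f, LinearMap.comp_apply, he0]; simp
  have hf1 : f e1 = 0 := by simp only [f, LinearMap.comp_apply, he1]; simp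
  have hg0 : g e0 = 0 := by simp only [g, LinearMap.comp_apply, he0]; simp
  have hg1 : g e1 = 1 := by simp only [g, LinearMap.comp_apply, he1]; simp
  let D : V → V → ℝ := fun a b => f a * g b - g a * f b
  have hDanti : ∀ a b, D b a = - D a b := fun a b => by simp only [D]; ring
  -- positive independence modulo S
  have hpos : ∀ a ∈ Δ, ∀ x ∈ cone Δ, ∀ r : ℝ, 0 < r → r • a + x ∈ S → a ∈ S := by
    intro a ha x hx r hr h
    have hra := cone_smul (cone_mem ha) hr.le
    have h1 := cone_span (face_add rfl hF hra hx (face_span hKΔ hF (cone_add hra hx) h))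
    have h2 := Submodule.smul_mem _ r⁻¹ h1
    rwa [smul_smul, inv_mul_cancel₀ hr.ne', one_smul] at h2
  have hident : ∀ a b c, D c a • b + (D b c • a + D a b • c) ∈ S := by
    intro a b c
    apply hker
    · simp only [map_add, map_smul, smul_eq_mul, D]; ring
    · simp only [map_add, map_smul, smul_eq_mul, D]; ring
  set s := Δ.filter fun a => a ∉ S with hsdef
  have hsm : ∀ a, a ∈ s ↔ a ∈ Δ ∧ a ∉ S := fun a => by simp [hsdef]
  have hsne : s.Nonempty := by
    by_contra hcon
    rw [Finset.not_nonempty_iff_eq_empty] at hcon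
    have : (⊤ : Submodule ℝ V) ≤ S := by
      rw [← hΔ.spans]
      refine Submodule.span_le.2 fun a ha => ?_
      by_contra hn
      have : a ∈ s := (hsm a).2 ⟨ha, hn⟩
      rw [hcon] at this
      simp at this
    rw [top_le_iff.1 this, finrank_top] at hfr
    omega
  have htr : ∀ a ∈ s, ∀ b ∈ s, ∀ c ∈ s, 0 ≤ D a b → 0 ≤ D b c → 0 ≤ D a c := by
    intro a ha b hb c hc h1 h2
    by_contra h3
    push Not at h3
    refine ((hsm b).1 hb).2 (hpos b ((hsm b).1 hb).1 (D b c • a + D a b • c) ?_ (D c a) ?_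
      (hident a b c))
    · exact cone_add (cone_smul (cone_mem ((hsm a).1 ha).1) h2)
        (cone_smul (cone_mem ((hsm c).1 hc).1) h1)
    · rw [hDanti]; linarith
  have htot : ∀ a ∈ s, ∀ b ∈ s, 0 ≤ D a b ∨ 0 ≤ D b a := by
    intro a _ b _
    rw [hDanti a b]
    rcases le_total 0 (D a b) with h | h
    · exact Or.inl h
    · exact Or.inr (by linarith)
  obtain ⟨a0, ha0, hmin0⟩ := exists_min_rel (fun a b => 0 ≤ D a b) s hsne htot htr
  obtain ⟨a1, ha1, hmin1⟩ := exists_min_rel (fun a b => 0 ≤ D b a) s hsne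
    (fun a ha b hb => htot b hb a ha)
    (fun a ha b hb c hc h1 h2 => htr c hc b hb a ha h2 h1)
  let L : V → V →ₗ[ℝ] ℝ := fun a => f a • g - g a • f
  have hLD : ∀ a b, L a b = D a b := fun a b => by simp [L, D]
  have hDS : ∀ a, ∀ b ∈ S, D a b = 0 := by
    intro a b hb; simp [D, hfS b hb, hgS b hb]
  -- construction of a weight from a functional `r L a`, r = ± 1
  have hcons : ∀ a ∈ s, ∀ r : ℝ, r ≠ 0 → (∀ b ∈ s, 0 ≤ r * D a b) →
      ∃ (ω : V) (c : ℝ), 0 < c ∧ (∀ x, B ω x = c * (r * D a x)) ∧ ω ∈ weights B Δ := by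
    intro a ha r hr hnn
    have hap : ∀ x, (r • L a) x = r * D a x := fun x => by simp [hLD]
    obtain ⟨x, hx⟩ : ∃ x, D a x ≠ 0 := by
      by_contra hcon
      push Not at hcon
      refine ((hsm a).1 ha).2 (hker a ?_ ?_)
      · have := hcon e1
        simpa [D, hf1, hg1] using this
      · have := hcon e0
        simpa [D, hf0, hg0] using this
    have hker1 : Submodule.span ℝ ((Δ.filter fun b => (r • L a) b = 0 : Finset V) : Set V)
        ≤ LinearMap.ker (r • L a) :=
      Submodule.span_le.2 fun b hb => (Finset.mem_filter.1 hb).2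
    have hlt1 : Module.finrank ℝ (LinearMap.ker (r • L a)) < Module.finrank ℝ V :=
      Submodule.finrank_lt (fun h => by
        have : x ∈ LinearMap.ker (r • L a) := by rw [h]; trivial
        rw [LinearMap.mem_ker, hap] at this
        exact (mul_ne_zero hr hx) this)
    have hle1 := Submodule.finrank_mono hker1
    have hlt2 : S < Submodule.span ℝ ((Δ.filter fun b => (r • L a) b = 0 : Finset V) : Set V) := by
      refine lt_of_le_of_ne (Submodule.span_mono ?_) ?_
      · intro b hb
        have hbS : b ∈ S := Submodule.subset_span hb
        have : (r • L a) b = 0 := by rw [hap, hDS a b hbS, mul_zero]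
        exact Finset.mem_coe.2 (Finset.mem_filter.2 ⟨hKΔ hb, this⟩)
      · intro h
        apply ((hsm a).1 ha).2
        rw [h]
        have : (r • L a) a = 0 := by rw [hap]; simp only [D]; ring
        exact Submodule.subset_span
          (Finset.mem_coe.2 (Finset.mem_filter.2 ⟨((hsm a).1 ha).1, this⟩))
    have hlt2' := Submodule.finrank_lt_finrank_of_lt hlt2
    obtain ⟨ω, c, hc, hω, hw⟩ := make_weight hs hΔ hL (r • L a) (by
      intro b hb
      rw [hap]
      by_cases hbS : b ∈ S
      · rw [hDS a b hbS, mul_zero]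
      · exact hnn b ((hsm b).2 ⟨hb, hbS⟩)) (by omega)
    exact ⟨ω, c, hc, fun x => by rw [hω, hap], _, hw⟩
  obtain ⟨ω0, c0, hc0, hω0, hw0⟩ := hcons a0 ha0 1 one_ne_zero (fun b hb => by
    rw [one_mul]; exact hmin0 b hb)
  obtain ⟨ω1, c1, hc1, hω1, hw1⟩ := hcons a1 ha1 (-1) (by norm_num) (fun b hb => by
    have := hmin1 b hb
    simp only [hDanti a1 b] at this
    linarith)
  refine ⟨ω0, hw0, ω1, hw1, fun x hx => by rw [hω0, hDS _ x hx]; simp,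
    fun x hx => by rw [hω1, hDS _ x hx]; simp, ?_⟩
  intro c hc
  have h01 : D a0 a1 = 0 := by
    have h1 := hω0 a1
    rw [hc, map_smul, LinearMap.smul_apply, hω1] at h1
    have h2 : D a1 a1 = 0 := by simp only [D]; ring
    rw [h2] at h1
    simp only [mul_zero, smul_zero, one_mul] at h1
    exact (mul_eq_zero.1 h1.symm).resolve_left hc0.ne'
  have hall : ∀ b ∈ Δ, D a0 b = 0 := by
    intro b hb
    by_cases hbS : b ∈ S
    · exact hDS a0 b hbS
    have hbs : b ∈ s := (hsm b).2 ⟨hb, hbS⟩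
    have h1 := hmin0 b hbs
    have h2 := hmin1 b hbs
    by_contra hne
    have hid := hident a0 b a1
    rw [hDanti a0 a1, h01, neg_zero, zero_smul, zero_add, add_comm] at hid
    exact ((hsm a1).1 ha1).2 (hpos a1 ((hsm a1).1 ha1).1 _
      (cone_smul (cone_mem ((hsm a0).1 ha0).1) h2) _ (lt_of_le_of_ne h1 (Ne.symm hne)) hid)
  obtain ⟨I, hI⟩ := hw0
  obtain ⟨α, hα, -, h1⟩ := hI.2.2.2.2
  rw [hs, hω0, hall α hα] at h1
  simp at h1

lemma weight_chamber {B : LinearMap.BilinForm ℝ V} {Δ I : Finset V} {ω : V}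
    (hw : IsWeight B Δ I ω) : ∀ α ∈ Δ, 0 ≤ B α ω := by
  intro α hα
  by_cases h : α ∈ I
  · exact (hw.2.1 α h).ge
  · exact (hw.2.2.1 α hα h).le

lemma weight_perp {B : LinearMap.BilinForm ℝ V} (hs : ∀ x y : V, B x y = B y x)
    {Δ I : Finset V} {ω : V}
    (hw : IsWeight B Δ I ω) (x : V) : x ∈ Submodule.span ℝ (I : Set V) ↔ B ω x = 0 := by
  have hle : Submodule.span ℝ (I : Set V) ≤ LinearMap.ker (B ω) :=
    Submodule.span_le.2 fun a ha => by
      change B ω a = 0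
      rw [hs]; exact hw.2.1 a ha
  obtain ⟨α, hα, -, h1⟩ := hw.2.2.2.2
  have hlt : Module.finrank ℝ (LinearMap.ker (B ω)) < Module.finrank ℝ V :=
    Submodule.finrank_lt (fun h => by
      have : α ∈ LinearMap.ker (B ω) := by rw [h]; trivial
      rw [LinearMap.mem_ker, hs, h1] at this
      exact one_ne_zero this)
  have := hw.1.2.2
  rw [Submodule.eq_of_le_of_finrank_le hle (by omega)]
  exact LinearMap.mem_ker

/-- orthogonal projection of a time-like vector to the complement of a space-like one -/
lemma proj_timelike {B : LinearMap.BilinForm ℝ V} (hs : ∀ x y : V, B x y = B y x)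
    (hL : IsLorentz B) {ω : V} (hq : 0 < B ω ω) : ∃ z, B ω z = 0 ∧ B z z < 0 := by
  obtain ⟨t, ht⟩ := hL.2.1
  refine ⟨t - (B ω t / B ω ω) • ω, ?_, ?_⟩
  · simp only [map_sub, map_smul, smul_eq_mul]; field_simp; ring
  · have : B (t - (B ω t / B ω ω) • ω) (t - (B ω t / B ω ω) • ω) =
        B t t - (B ω t) ^ 2 / B ω ω := by
      simp only [map_sub, map_smul, LinearMap.sub_apply, LinearMap.smul_apply, smul_eq_mul,
        hs t ω]
      field_simp
      ring
    rw [this]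
    have : 0 ≤ (B ω t) ^ 2 / B ω ω := by positivity
    linarith

/-- The projection estimate. -/
lemma proj_estimate {B : LinearMap.BilinForm ℝ V} (hs : ∀ x y : V, B x y = B y x)
    {Δ I : Finset V} (hΔ : IsRootBasis B Δ) (hL : IsLorentz B) (hlev : LevelLE B Δ 2)
    {ω : V} (hw : IsWeight B Δ I ω) (hq : 0 < B ω ω) (y : V)
    (hy : (∀ β ∈ I, 0 ≤ B y β) ∨ (∀ β ∈ I, B y β ≤ 0)) :
    B y y * B ω ω ≤ (B ω y) ^ 2 := by
  obtain ⟨z, hz, hz0⟩ := proj_timelike hs hL hq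
  set r := B ω y / B ω ω with hr
  have hrq : r * B ω ω = B ω y := by rw [hr]; field_simp
  have hp : B ω (y - r • ω) = 0 := by
    simp only [map_sub, map_smul, smul_eq_mul]; linarith
  have hval : ∀ β ∈ I, B (y - r • ω) β = B y β := by
    intro β hβ
    have : B ω β = 0 := by rw [hs]; exact hw.2.1 β hβ
    simp [this]
  have hmem := (weight_perp hs hw _).2 hp
  have hzm := (weight_perp hs hw _).2 hz
  have hle : B (y - r • ω) (y - r • ω) ≤ 0 := by
    rcases hy with h | h
    · exact facet_chamber hs hΔ hw.1 hlev hzm hz0 hmem (fun β hβ => by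
        rw [hval β hβ]; exact h β hβ)
    · have := facet_chamber hs hΔ hw.1 hlev hzm hz0 (Submodule.neg_mem _ hmem) (fun β hβ => by
        rw [map_neg, LinearMap.neg_apply, hval β hβ]; linarith [h β hβ])
      have e2 : ∀ x : V, B (-x) (-x) = B x x := by intro x; simp
      rw [e2] at this
      exact this
  have e : B (y - r • ω) (y - r • ω) = B y y - r * B ω y := by
    have : B (y - r • ω) ω = 0 := by rw [hs]; exact hp
    rw [map_sub (B (y - r • ω)), map_smul, this]
    simp [hs ω y]
  rw [e] at hle
  have : (B y y - r * B ω y) * B ω ω ≤ 0 := mul_nonpos_of_nonpos_of_nonneg hle hq.le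
  have e3 : (B y y - r * B ω y) * B ω ω = B y y * B ω ω - (B ω y)^2 := by
    rw [sub_mul, mul_right_comm, hrq]; ring
  rw [e3] at this
  linarith [mul_comm (B y y) (B ω ω)]

/-- Non-proportional space-like weights are disjoint. -/
lemma weights_disjoint {B : LinearMap.BilinForm ℝ V} (hs : ∀ x y : V, B x y = B y x)
    {Δ I J : Finset V} (hΔ : IsRootBasis B Δ) (hL : IsLorentz B) (hlev : LevelLE B Δ 2)
    {ω η : V} (hw : IsWeight B Δ I ω) (hq : 0 < B ω ω)
    (hv : IsWeight B Δ J η) (hq' : 0 < B η η) (hne : ∀ c : ℝ, η ≠ c • ω) :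
    B ω η ≤ 0 ∧ B ω ω * B η η ≤ (B ω η) ^ 2 := by
  have hest := proj_estimate hs hΔ hL hlev hw hq η (Or.inl fun β hβ => by
    rw [hs]; exact weight_chamber hv β (hw.1.1 hβ))
  refine ⟨?_, by linarith⟩
  by_contra hb
  push Not at hb
  set b := B ω η with hbdef
  set q := B ω ω with hqdef
  set q' := B η η with hqdef'
  obtain ⟨v0, hv0, hv0Δ⟩ := perron hs hΔ hL
  -- general statement on one side
  have side : ∀ (I : Finset V) (ω η : V), IsWeight B Δ I ω → 0 < B ω ω →
      (∀ α ∈ Δ, 0 ≤ B α η) → B η η * B ω ω ≤ (B ω η) ^ 2 → (∀ c : ℝ, η ≠ c • ω) →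
      B ((B ω η / B ω ω) • ω - η) ((B ω η / B ω ω) • ω - η) ≤ 0 ∧
        B ((B ω η / B ω ω) • ω - η) v0 < 0 := by
    intro I ω η hw hq hη hest hne
    set u := (B ω η / B ω ω) • ω - η with hu
    have hu0 : u ≠ 0 := fun h => hne _ (sub_eq_zero.1 h).symm
    have huu : B u u ≤ 0 := by
      have : B u u = (B η η * B ω ω - (B ω η) ^ 2) / B ω ω := by
        rw [hu]
        simp only [map_sub, map_smul, LinearMap.sub_apply, LinearMap.smul_apply, smul_eq_mul,
          hs η ω]
        field_simp
        ring
      rw [this]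
      exact div_nonpos_of_nonpos_of_nonneg (by linarith) hq.le
    refine ⟨huu, ?_⟩
    obtain ⟨z, hz, hz0⟩ := proj_timelike hs hL hq
    obtain ⟨t, htI, ht⟩ := timelike_cone hs hΔ hw.1.1 ((weight_perp hs hw z).2 hz) hz0
    have htΔ := cone_mono hw.1.1 htI
    have hωt : B ω t = 0 := (weight_perp hs hw t).1 (cone_span htI)
    have hηt : 0 ≤ B η t := cone_dual_nonneg (B η) (fun a ha => by rw [hs]; exact hη a ha) htΔ
    have hut : B u t < 0 := by
      refine lt_of_le_of_ne ?_ ?_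
      · rw [hu]; simp [hωt, hηt]
      · intro h
        rw [hs] at h
        linarith [lorentz_pos hs hL ht h hu0]
    have hv0t : B v0 t < 0 := by
      refine lt_of_le_of_ne ?_ ?_
      · have := cone_dual_nonneg (-(B v0)) (fun a ha => by
          simpa using hv0Δ a ha) htΔ
        simpa using this
      · intro h
        have ht0 : t ≠ 0 := by rintro rfl; simp at ht
        linarith [lorentz_pos hs hL hv0 h ht0]
    rcases nappe hs hL ht huu hv0.le hut hv0t with h | ⟨r, hr, h⟩
    · exact h
    · have h2 : B v0 v0 = r * B u v0 := by
        have h4 := congrArg (fun x => B x v0) h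
        simp only [map_smul, LinearMap.smul_apply, smul_eq_mul] at h4
        exact h4
      by_contra h3
      push Not at h3
      nlinarith [mul_nonneg hr.le h3]
  have hne' : ∀ c : ℝ, ω ≠ c • η := by
    intro c hc
    have hc0 : c ≠ 0 := by
      rintro rfl
      rw [zero_smul] at hc
      rw [hqdef, hc] at hq
      simp at hq
    exact hne c⁻¹ (by rw [hc, smul_smul, inv_mul_cancel₀ hc0, one_smul])
  obtain ⟨hu1, hu2⟩ := side I ω η hw hq (weight_chamber hv) (by linarith) hne
  obtain ⟨hv1, hv2⟩ := side J η ω hv hq' (weight_chamber hw) (by rw [hs η ω]; linarith) hne'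
  rw [hs η ω] at hv1 hv2
  have huv : B ((b / q) • ω - η) ((b / q') • η - ω) = b * (b ^ 2 - q * q') / (q * q') := by
    simp only [map_sub, map_smul, LinearMap.sub_apply, LinearMap.smul_apply, smul_eq_mul,
      hs η ω, ← hbdef, ← hqdef, ← hqdef']
    field_simp
    ring
  rcases nappe hs hL hv0 hu1 hv1 hu2 hv2 with h | ⟨r, hr, h⟩
  · rw [← hbdef, ← hqdef, ← hqdef', huv] at h
    have : 0 ≤ b * (b ^ 2 - q * q') / (q * q') := by
      apply div_nonneg (mul_nonneg hb.le (by linarith)) (by positivity)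
    linarith
  · -- positively proportional
    have h' : (b / q' + r) • η = (1 + r * (b / q)) • ω := by
      rw [← hbdef, ← hqdef, ← hqdef'] at h
      have e : (b / q') • η = r • ((b / q) • ω - η) + ω := by rw [← h]; abel
      rw [add_smul, e]; module
    have hpos : 0 < b / q' + r := by positivity
    apply hne ((b / q' + r)⁻¹ * (1 + r * (b / q)))
    rw [mul_smul, ← h', smul_smul, inv_mul_cancel₀ hpos.ne', one_smul]

lemma disjoint_of {B : LinearMap.BilinForm ℝ V} (hs : ∀ x y : V, B x y = B y x) {x y : V}
    (hy : 0 < B y y) (hxy : B x y ≤ 0) (hsq : B x x * B y y ≤ (B x y) ^ 2)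
    (hne : ∀ c : ℝ, x ≠ c • y) : DisjointVec B x y := by
  refine ⟨hxy, fun h => ?_⟩
  have h1 := h (x - (B x y / B y y) • y) (Submodule.sub_mem _
    (Submodule.subset_span (by simp)) (Submodule.smul_mem _ _ (Submodule.subset_span (by simp))))
    (sub_ne_zero.2 (hne _))
  have e : B (x - (B x y / B y y) • y) (x - (B x y / B y y) • y) =
      (B x x * B y y - (B x y) ^ 2) / B y y := by
    simp only [map_sub, map_smul, LinearMap.sub_apply, LinearMap.smul_apply, smul_eq_mul, hs y x]
    field_simp
    ring
  rw [e] at h1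
  have := div_nonpos_of_nonpos_of_nonneg (show B x x * B y y - (B x y) ^ 2 ≤ 0 by linarith) hy.le
  linarith

lemma omega_of_weight {B : LinearMap.BilinForm ℝ V} {Δ : Finset V} {ω : V}
    (h : ω ∈ weights B Δ) : ω ∈ Omega B Δ :=
  ⟨1, Subgroup.one_mem _, ω, h, rfl⟩

lemma weyl_isom {B : LinearMap.BilinForm ℝ V} (hs : ∀ x y : V, B x y = B y x)
    {Δ : Finset V} (hΔ : IsRootBasis B Δ) {w : V ≃ₗ[ℝ] V} (hw : w ∈ weylGroup B Δ) (x y : V) :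
    B (w x) (w y) = B x y := by
  obtain ⟨l, hl, h⟩ := exists_word hΔ.unit w hw
  have h' : ∀ v, word B l v = w v := fun v => by rw [h]; rfl
  rw [← h', ← h', word_isom hs (fun a ha => hΔ.unit a (hl a ha))]

lemma packing_of_level {B : LinearMap.BilinForm ℝ V} (hs : ∀ x y : V, B x y = B y x)
    {Δ : Finset V} (hΔ : IsRootBasis B Δ) (hL : IsLorentz B) (hlev : LevelLE B Δ 2)
    {x y : V} (hx : x ∈ Omega B Δ) (hy : y ∈ Omega B Δ) (hx0 : 0 < B x x) (hy0 : 0 < B y y)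
    (hne : ∀ c : ℝ, x ≠ c • y) : DisjointVec B x y := by
  obtain ⟨w, hw, ω, ⟨I, hω⟩, rfl⟩ := hx
  obtain ⟨v, hv, η, ⟨J, hη⟩, rfl⟩ := hy
  rw [weyl_isom hs hΔ hw] at hx0
  rw [weyl_isom hs hΔ hv] at hy0
  have hwv : w⁻¹ * v ∈ weylGroup B Δ := mul_mem (inv_mem hw) hv
  obtain ⟨l0, hl0, hlw0⟩ := exists_word hΔ.unit _ hwv
  obtain ⟨l, hl, hll, hred, -⟩ := exists_red B Δ l0 hl0
  have hwl : ∀ u, w (word B l u) = v u := by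
    intro u
    rw [hll, hlw0]
    exact w.apply_symm_apply (v u)
  have hB : B (w ω) (v η) = B ω (word B l η) := by
    rw [← hwl, weyl_isom hs hΔ hw]
  have hvv : B (v η) (v η) = B η η := weyl_isom hs hΔ hv _ _
  have hww : B (w ω) (w ω) = B ω ω := weyl_isom hs hΔ hw _ _
  have hωc := weight_chamber hω
  by_cases hprop : ∃ c : ℝ, η = c • ω
  · obtain ⟨c, rfl⟩ := hprop
    have hc0 : c ≠ 0 := by rintro rfl; simp at hy0
    have hc : 0 < c := by
      obtain ⟨α, hα, -, h1⟩ := hω.2.2.2.2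
      have := weight_chamber hη α hα
      rw [map_smul, h1, smul_eq_mul, mul_one] at this
      exact lt_of_le_of_ne this (Ne.symm hc0)
    rcases orbit_estimate hs hΔ hωc (fun α hα h => by
        have hαI : α ∉ I := fun hI => h (hω.2.1 α hI)
        have := proj_estimate hs hΔ hL hlev hω hx0 α (Or.inr fun β hβ =>
          offdiag_nonpos hΔ hα (hω.1.1 hβ) (fun e => hαI (e ▸ hβ)))
        rw [hΔ.unit α hα, one_mul, hs ω α] at this
        exact this) _ l rfl hl with h | h
    · exfalso
      apply hne c⁻¹
      rw [← hwl, map_smul, h, map_smul, smul_smul, inv_mul_cancel₀ hc0, one_smul]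
    · have hB' : B (w ω) (v (c • ω)) = c * B ω (word B l ω) := by rw [hB]; simp
      have hmul := mul_le_mul_of_nonneg_left h hc.le
      have hcq : 0 < c * B ω ω := mul_pos hc hx0
      refine disjoint_of hs (by rw [hvv]; exact hy0) ?_ ?_ hne
      · rw [hB']; nlinarith
      · rw [hB', hvv, hww]
        have e : B ω ω * B (c • ω) (c • ω) = (c * B ω ω) ^ 2 := by simp; ring
        rw [e]
        nlinarith
  · push Not at hprop
    obtain ⟨h1, h2⟩ := weights_disjoint hs hΔ hL hlev hω hx0 hη hy0 hprop
    have hmem := sub_word_mem hs hΔ (weight_chamber hη) l hl hred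
    have h3 := cone_dual_nonneg (B ω) (fun a ha => by rw [hs]; exact hωc a ha) hmem
    rw [map_sub] at h3
    refine disjoint_of hs (by rw [hvv]; exact hy0) ?_ ?_ hne
    · rw [hB]; linarith
    · rw [hB, hvv, hww]
      nlinarith

end Main

/-- extending Maxwell, Theorem 3.2. For a Lorentzian based root
system, the space-like vectors of `Ω` form a ball packing (i.e. `Ω` contains a
space-like vector and any two non-proportional space-like vectors of `Ω` are
disjoint) if and only if the root system has level `2`. -/
theorem packing_iff_level_two
    {V : Type*} [AddCommGroup V] [Module ℝ V] [FiniteDimensional ℝ V]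
    (B : LinearMap.BilinForm ℝ V) (hsymm : ∀ x y : V, B x y = B y x)
    (Δ : Finset V) (hΔ : IsRootBasis B Δ) (hLor : IsLorentz B) :
    HasLevel B Δ 2 ↔
      ((∃ x ∈ Omega B Δ, 0 < B x x) ∧
        ∀ x ∈ Omega B Δ, ∀ y ∈ Omega B Δ, 0 < B x x → 0 < B y y →
          (∀ c : ℝ, x ≠ c • y) → DisjointVec B x y) := by
  constructor
  · rintro ⟨h2, hlt⟩
    refine ⟨?_, fun x hx y hy hx0 hy0 hne =>
      packing_of_level hsymm hΔ hLor h2 hx hy hx0 hy0 hne⟩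
    have h1 := hlt 1 (by norm_num)
    unfold LevelLE at h1
    push Not at h1
    obtain ⟨I, hI, z, hz, hz0⟩ := h1
    obtain ⟨ω, hω⟩ := facial_weight hsymm hΔ hLor hI
    refine ⟨ω, omega_of_weight ⟨I, hω⟩, ?_⟩
    refine lorentz_pos hsymm hLor hz0 ?_ ?_
    · rw [hsymm]; exact (weight_perp hsymm hω z).1 hz
    · rintro rfl
      obtain ⟨α, -, -, h⟩ := hω.2.2.2.2
      simp at h
  · rintro ⟨⟨x, hx, hx0⟩, hpack⟩
    refine ⟨?_, ?_⟩
    · intro K hK z hz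
      by_contra hz0
      push Not at hz0
      obtain ⟨ω₀, hω₀, ω₁, hω₁, h0, h1, hne⟩ := ridge hsymm hΔ hLor hK
      have hperp : ∀ v, B v z = 0 → v ≠ 0 → 0 < B v v := fun v hv hv0 =>
        lorentz_pos hsymm hLor hz0 (by rw [hsymm]; exact hv) hv0
      have hnz : ∀ ω ∈ weights B Δ, ω ≠ 0 := by
        rintro ω ⟨I, hI⟩ rfl
        obtain ⟨α, -, -, h⟩ := hI.2.2.2.2
        simp at h
      have hd := hpack ω₀ (omega_of_weight hω₀) ω₁ (omega_of_weight hω₁)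
        (hperp _ (h0 z hz) (hnz _ hω₀)) (hperp _ (h1 z hz) (hnz _ hω₁)) hne
      refine hd.2 fun v hv hv0 => hperp v ?_ hv0
      obtain ⟨a, b, rfl⟩ := Submodule.mem_span_pair.1 hv
      simp [h0 z hz, h1 z hz]
    · intro m hm hlev
      obtain ⟨w, hw, ω, ⟨I, hω⟩, rfl⟩ := hx
      rw [weyl_isom hsymm hΔ hw] at hx0
      obtain ⟨z, hz, hz0⟩ := proj_timelike hsymm hLor hx0
      interval_cases m
      · have hface : IsFacial Δ Δ 0 := by
          refine ⟨subset_rfl, ⟨subset_rfl, cone_convex _, fun x hx y hy _ _ _ _ => ⟨hx, hy⟩⟩, ?_⟩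
          rw [hΔ.spans, finrank_top, add_zero]
        have := hlev Δ hface z (by rw [hΔ.spans]; trivial)
        linarith
      · have := hlev I hω.1 z ((weight_perp hsymm hω z).2 hz)
        linarith

end BoydMaxwell
end

section
/- Let Δ be a root basis in a non-degenerate quadratic space (V,B), with Weyl group W and Tits cone T. Then every vector x ∈ V satisfying B(x,y) ≥ 0 for all y ∈ T (i.e. every vector in the dual cone of the Tits cone) satisfies B(x,x) ≤ 0. -/
open scoped BigOperators

namespace BoydMaxwell

variable {V : Type*} [AddCommGroup V] [Module ℝ V]

/-- Every element of the Weyl group is an isometry. -/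
lemma weyl_isometry (B : LinearMap.BilinForm ℝ V) (hsymm : ∀ x y : V, B x y = B y x)
    (Δ : Finset V) (hunit : ∀ α ∈ Δ, B α α = 1) (w : V ≃ₗ[ℝ] V) (hw : w ∈ weylGroup B Δ) :
    ∀ x y : V, B (w x) (w y) = B x y := by
  unfold weylGroup at hw
  induction hw using Subgroup.closure_induction with
  | mem g hg =>
    obtain ⟨α, hα, hg⟩ := hg
    have hg' : ∀ x, g x = x - B α x • ((2 : ℝ) • α) := fun x => by
      have := congrArg (fun f : V →ₗ[ℝ] V => f x) hg
      simpa [reflection] using this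
    intro x y
    rw [hg', hg']
    simp only [map_sub, map_smul, LinearMap.sub_apply, LinearMap.smul_apply, smul_eq_mul,
      hunit α hα, hsymm x α]
    ring
  | one => intro x y; rfl
  | mul a b _ _ ha hb => intro x y; exact (ha _ _).trans (hb _ _)
  | inv a _ ha =>
    intro x y
    have h := ha (a⁻¹ x) (a⁻¹ y)
    have e : ∀ z, a (a⁻¹ z) = z := fun z => a.apply_symm_apply z
    rw [e, e] at h
    exact h.symm

/-- Simple reflections lift to the Weyl group. -/
lemma reflection_mem (B : LinearMap.BilinForm ℝ V)
    (Δ : Finset V) (hunit : ∀ α ∈ Δ, B α α = 1) (α : V) (hα : α ∈ Δ) :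
    ∃ w ∈ weylGroup B Δ, ∀ x, w x = reflection B α x := by
  have hinv : Function.Involutive (reflection B α) := by
    intro x
    simp only [reflection, LinearMap.sub_apply, LinearMap.id_apply, LinearMap.smulRight_apply,
      map_sub, map_smul, smul_eq_mul, hunit α hα]
    module
  exact ⟨LinearEquiv.ofInvolutive (reflection B α) hinv,
    Subgroup.subset_closure ⟨α, hα, by ext x; rfl⟩, fun x => rfl⟩

lemma dual_titsCone_normed
    {V : Type*} [NormedAddCommGroup V] [NormedSpace ℝ V] [FiniteDimensional ℝ V]
    (B : LinearMap.BilinForm ℝ V) (hsymm : ∀ x y : V, B x y = B y x)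
    (hnd : B.Nondegenerate)
    (Δ : Finset V) (hΔ : IsRootBasis B Δ) {ι : Type*} [Fintype ι] (b : ι → V)
    (hb : ∀ x r, 0 ≤ r → (∀ i, |B x (b i)| ≤ r) → ‖x‖ ≤ r) :
    ∀ x : V, (∀ y ∈ titsCone B Δ, 0 ≤ B x y) → B x x ≤ 0 := by
  intro x hx
  -- a vector strictly inside the chamber
  obtain ⟨h, hh⟩ : ∃ h : V, ∀ α ∈ Δ, 0 < B h α := by
    have h0 : (0 : V) ∉ convexHull ℝ (Δ : Set V) := by
      intro h0
      rw [Finset.mem_convexHull'] at h0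
      obtain ⟨c, hc, hsum, hz⟩ := h0
      have := hΔ.posIndep c hc hz
      rw [Finset.sum_eq_zero this] at hsum
      exact zero_ne_one hsum
    obtain ⟨f, u, hf0, hf⟩ := geometric_hahn_banach_point_closed (convex_convexHull ℝ (Δ : Set V))
      ((Δ.finite_toSet.isCompact_convexHull ℝ).isClosed) h0
    refine ⟨(B.toDual hnd).symm f.toLinearMap, fun α hα => ?_⟩
    rw [LinearMap.BilinForm.apply_toDual_symm_apply]
    have := hf α (subset_convexHull ℝ _ hα)
    rw [map_zero] at hf0
    exact hf0.trans this
  have cont2 : Continuous fun z : V => B z z := by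
    have := (B.toContinuousBilinearMap).continuous.clm_apply (continuous_id (X := V))
    exact this
  have cont1 : ∀ y : V, Continuous fun z : V => B z y := fun y => by
    have := (B.toContinuousBilinearMap).continuous.clm_apply (continuous_const (y := y))
    exact this
  let O : Set V := {z | ∃ w ∈ weylGroup B Δ, z = w x}
  have hxO : x ∈ O := ⟨1, one_mem _, rfl⟩
  have hOD : ∀ y ∈ chamber B Δ, ∀ z ∈ closure O, 0 ≤ B z y := by
    intro y hy z hz
    refine closure_minimal (t := {z | 0 ≤ B z y}) ?_
      (isClosed_le continuous_const (cont1 y)) hz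
    rintro _ ⟨w, hw, rfl⟩
    have e : w (w⁻¹ y) = y := w.apply_symm_apply y
    have := hx (w⁻¹ y) ⟨w⁻¹, inv_mem hw, y, hy, rfl⟩
    rwa [← weyl_isometry B hsymm Δ hΔ.unit w hw, e] at this
  have hBz : ∀ z ∈ closure O, B z z = B x x := by
    intro z hz
    refine closure_minimal (t := {z | B z z = B x x}) ?_
      (isClosed_eq cont2 continuous_const) hz
    rintro _ ⟨w, hw, rfl⟩
    exact weyl_isometry B hsymm Δ hΔ.unit w hw x x
  have hrefl : ∀ α ∈ Δ, ∀ z ∈ closure O, reflection B α z ∈ closure O := by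
    intro α hα z hz
    refine map_mem_closure (reflection B α).continuous_of_finiteDimensional hz ?_
    rintro _ ⟨w, hw, rfl⟩
    obtain ⟨s, hs, hs'⟩ := reflection_mem B Δ hΔ.unit α hα
    exact ⟨s * w, mul_mem hs hw, (hs' _).symm⟩
  -- boundedness of the slices
  have hbd : ∀ y : V, ∃ M : ℝ, 0 ≤ M ∧ ∀ z ∈ closure O, |B z y| ≤ M * B z h := by
    intro y
    have hnn : ∀ α ∈ Δ, 0 ≤ |B y α| / B h α := fun α hα =>
      div_nonneg (abs_nonneg _) (hh α hα).le
    refine ⟨∑ α ∈ Δ, |B y α| / B h α, Finset.sum_nonneg hnn, fun z hz => ?_⟩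
    set M := ∑ α ∈ Δ, |B y α| / B h α
    have hM : ∀ α ∈ Δ, |B y α| ≤ M * B h α := fun α hα => by
      rw [← div_le_iff₀ (hh α hα)]
      exact Finset.single_le_sum (f := fun α => |B y α| / B h α) hnn hα
    have h1 := hOD (M • h + y) (fun α hα => by
      have := abs_le.1 (hM α hα)
      simp only [map_add, map_smul, LinearMap.add_apply, LinearMap.smul_apply, smul_eq_mul]
      linarith) z hz
    have h2 := hOD (M • h - y) (fun α hα => by
      have := abs_le.1 (hM α hα)
      simp only [map_sub, map_smul, LinearMap.sub_apply, LinearMap.smul_apply, smul_eq_mul]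
      linarith) z hz
    simp only [map_add, map_sub, map_smul, smul_eq_mul] at h1 h2
    rw [abs_le]
    constructor <;> linarith
  choose M hM0 hM using hbd
  have hhx : 0 ≤ B x h := hOD h (fun α hα => (hh α hα).le) x (subset_closure hxO)
  let K : Set V := closure O ∩ {z | B z h ≤ B x h}
  have hK : IsCompact K := by
    refine Metric.isCompact_of_isClosed_isBounded
      (isClosed_closure.inter (isClosed_le (cont1 h) continuous_const)) ?_
    rw [isBounded_iff_forall_norm_le]
    have hS : ∀ i ∈ Finset.univ, 0 ≤ M (b i) * B x h := fun i _ => mul_nonneg (hM0 _) hhx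
    refine ⟨∑ i, M (b i) * B x h, fun z hz => hb z _ (Finset.sum_nonneg hS) fun i => ?_⟩
    refine (hM (b i) z hz.1).trans ((mul_le_mul_of_nonneg_left hz.2 (hM0 _)).trans ?_)
    exact Finset.single_le_sum (f := fun i => M (b i) * B x h) hS (Finset.mem_univ i)
  obtain ⟨z, hzK, hz⟩ := hK.exists_isMinOn ⟨x, subset_closure hxO, le_refl (B x h)⟩
    (cont1 h).continuousOn
  have hmin : ∀ y ∈ closure O, B z h ≤ B y h := by
    intro y hy
    by_cases hc : B y h ≤ B x h
    · exact hz (show y ∈ K from ⟨hy, hc⟩)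
    · exact hzK.2.trans (not_le.1 hc).le
  have hneg : -z ∈ chamber B Δ := by
    intro α hα
    have h1 := hmin _ (hrefl α hα z hzK.1)
    simp only [reflection, LinearMap.sub_apply, LinearMap.id_apply, LinearMap.smulRight_apply,
      map_sub, map_smul, LinearMap.smul_apply, smul_eq_mul] at h1
    have h2 := hh α hα
    rw [hsymm h α] at h2
    rw [map_neg, LinearMap.neg_apply, hsymm z α]
    by_contra hc
    have : 0 < B α z := by linarith
    nlinarith [mul_pos this h2]
  have h1 := hOD _ hneg z hzK.1
  rw [map_neg, hBz z hzK.1] at h1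
  linarith

/-- extending Maxwell, Proposition 1.2; Howlett–Rowley–Taylor,
Proposition 3.4. Every vector in the dual cone of the Tits cone satisfies
`B(x,x) ≤ 0`. -/
theorem dual_titsCone_nonpos
    {V : Type*} [AddCommGroup V] [Module ℝ V] [FiniteDimensional ℝ V]
    (B : LinearMap.BilinForm ℝ V) (hsymm : ∀ x y : V, B x y = B y x)
    (hnd : B.Nondegenerate)
    (Δ : Finset V) (hΔ : IsRootBasis B Δ) :
    ∀ x : V, (∀ y ∈ titsCone B Δ, 0 ≤ B x y) → B x x ≤ 0 := by
  let b := Module.finBasis ℝ V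
  let f : V →ₗ[ℝ] (Fin (Module.finrank ℝ V) → ℝ) := LinearMap.pi fun i => B.flip (b i)
  have hf : Function.Injective f := by
    rw [injective_iff_map_eq_zero]
    intro z hz
    have hz0 : B z = 0 := b.ext fun i => congrFun hz i
    exact hnd.1 z fun y => by rw [hz0]; rfl
  letI : NormedAddCommGroup V := NormedAddCommGroup.induced V _ f hf
  letI : NormedSpace ℝ V := NormedSpace.induced ℝ V _ f
  exact dual_titsCone_normed B hsymm hnd Δ hΔ b
    fun x r hr hx => (pi_norm_le_iff_of_nonneg (x := f x) hr).2 hx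

end BoydMaxwell
end
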